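/- arXiv:1401.3014 — 4 statements merged into one kernel-verified Lean document; each statement's English description precedes it below -/
import Mathlib

section
/- Let 𝒯 = (A,T,G) be a regularity structure, let d ≥ 1, let r > |min A| be an integer, and let (Π,Γ) be a model for 𝒯 on ℝ^d. Then for every γ > 0 there exists a unique linear map R : D^γ → D'(ℝ^d) such that for every f ∈ D^γ and every compact set K ⊂ ℝ^d there is a constant C with |(Rf − Π_x f(x))(φ_x^λ)| ≤ C λ^γ uniformly over all φ ∈ B_r, all λ ∈ (0,1], and all x ∈ K. (Reconstruction theorem.) -/
/-!
The germ `F x = Π_x f(x)` of a modelled distribution `f ∈ D^γ` is coherent: since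
`F x - F y = Π_x (f x - Γ_{xy} f y)`, the bounds on the model and on `f` give
`|(F x - F y)(φ_x^l)| ≲ l ^ γ` as soon as `|x - y| ≲ l` (`coherent_of_InD`). The rest of the
argument only uses coherence and `γ > 0`.

For each scale `l` there is a smooth partition of unity `bump (latticePt l k) l`, indexed by
`k ∈ ℤ^d`, with the `k`-th member supported in the ball of radius `l` around the lattice point
`latticePt l k`. Gluing the functionals at the lattice points yields the approximation
`glue F l ψ = ∑ k, F (latticePt l k) (ψ * bump (latticePt l k) l)`. A function `ψ` varying at
scale at least `l` and multiplied by such a bump is `O(l ^ d)` times a rescaled element of `B_r`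
(`exists_localise`), and a ball of radius `ρ ≥ l` meets `O((ρ / l) ^ d)` bumps (`box_card`).
Cutting `ψ` first at scale `l` and then at scale `l / 2`, coherence shows
`|glue F l ψ - glue F (l / 2) ψ| ≲ ρ ^ d * l ^ γ` (`glue_half`). As `γ > 0`, this is summable along
dyadic scales, so `glue F (2 ^ (-n)) ψ` converges for every compactly supported `C^r` function
(`glue_limit`). Comparing the limit with `glue F l` and the latter with `F x` on `φ_x^l` gives the
reconstruction bound (`limit_near`).

For uniqueness, the difference `u` of two reconstructions is `O(l ^ γ)` on rescaled test functions.
Cutting a test function into `O(l ^ (-d))` pieces, each contributing `O(l ^ (d + γ))`, shows that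
`u` vanishes (`eq_zero_of_small`).
-/

open MeasureTheory Metric Set Filter

noncomputable section

/-- Euclidean space `ℝ^d`. -/
abbrev Rd (d : ℕ) := EuclideanSpace ℝ (Fin d)

/-- The rescaled and recentred test function `φ_x^λ (y) = λ^{-d} φ(λ⁻¹(y-x))`. -/
def scal {d : ℕ} (φ : Rd d → ℝ) (x : Rd d) (l : ℝ) : Rd d → ℝ :=
  fun y => (l ^ d)⁻¹ * φ (l⁻¹ • (y - x))

/-- The set `B_r` of `C^r` test functions supported in the unit ball with `C^r` norm at most 1. -/
def Br (d r : ℕ) : Set (Rd d → ℝ) :=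
  {φ | ContDiff ℝ (r : ℕ∞) φ ∧ tsupport φ ⊆ closedBall (0 : Rd d) 1 ∧
    ∀ i ≤ r, ∀ y, ‖iteratedFDeriv ℝ i φ y‖ ≤ 1}

/-- A smooth compactly supported function. -/
def IsTestFunction {d : ℕ} (f : Rd d → ℝ) : Prop :=
  ContDiff ℝ (⊤ : ℕ∞) f ∧ HasCompactSupport f

/-- The local continuity estimate making a linear functional on functions a distribution:
on every compact set it is bounded by some `C^k` norm of the test function. -/
def IsDistribution {d : ℕ} (u : (Rd d → ℝ) →ₗ[ℝ] ℝ) : Prop :=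
  ∀ K : Set (Rd d), IsCompact K → ∃ C : ℝ, ∃ k : ℕ, ∀ f : Rd d → ℝ,
    IsTestFunction f → tsupport f ⊆ K → ∀ B : ℝ,
      (∀ i ≤ k, ∀ y, ‖iteratedFDeriv ℝ i f y‖ ≤ B) → |u f| ≤ C * B

section RegularityStructures

variable {d : ℕ} {ι : Type} [Fintype ι] [DecidableEq ι]
  {T : ι → Type} [∀ i, NormedAddCommGroup (T i)] [∀ i, NormedSpace ℝ (T i)]

/-- `G` is a structure group for the grading `deg`: a group of invertible linear maps on
`T = ⊕_α T_α` such that `Γ τ - τ` has components only in degrees `< α` for `τ ∈ T_α`. -/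
def IsStructureGroup (deg : ι → ℝ) (G : Set ((∀ i, T i) ≃ₗ[ℝ] (∀ i, T i))) : Prop :=
  (LinearEquiv.refl ℝ (∀ i, T i)) ∈ G ∧
  (∀ g₁ ∈ G, ∀ g₂ ∈ G, (g₂.trans g₁) ∈ G) ∧
  (∀ g ∈ G, g.symm ∈ G) ∧
  (∀ g ∈ G, ∀ (i : ι) (v : T i), ∀ j : ι, deg i ≤ deg j →
    (g (Pi.single i v) - Pi.single i v) j = 0)

/-- `(Pmap, Γ)` is a model for the regularity structure `(deg, T, G)` on `ℝ^d`,
with analytical bounds tested against test functions in `B_r`. -/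
def IsModel (r : ℕ) (deg : ι → ℝ) (G : Set ((∀ i, T i) ≃ₗ[ℝ] (∀ i, T i)))
    (Pmap : Rd d → (∀ i, T i) →ₗ[ℝ] ((Rd d → ℝ) →ₗ[ℝ] ℝ))
    (Γ : Rd d → Rd d → ((∀ i, T i) ≃ₗ[ℝ] (∀ i, T i))) : Prop :=
  (∀ x y : Rd d, Γ x y ∈ G) ∧
  (∀ (x : Rd d) (τ : ∀ i, T i), IsDistribution (Pmap x τ)) ∧
  (∀ x y z : Rd d, ∀ τ : ∀ i, T i, Γ x y (Γ y z τ) = Γ x z τ) ∧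
  (∀ x y : Rd d, ∀ (τ : ∀ i, T i) (ψ : Rd d → ℝ), Pmap x (Γ x y τ) ψ = Pmap y τ ψ) ∧
  (∀ K : Set (Rd d), IsCompact K → ∃ C : ℝ,
    (∀ (i : ι) (v : T i), ∀ x ∈ K, ∀ φ ∈ Br d r, ∀ l : ℝ, 0 < l → l ≤ 1 →
      |Pmap x (Pi.single i v) (scal φ x l)| ≤ C * l ^ (deg i) * ‖v‖) ∧
    (∀ i j : ι, deg j < deg i → ∀ v : T i, ∀ x ∈ K, ∀ y ∈ K,
      ‖Γ x y (Pi.single i v) j‖ ≤ C * ‖x - y‖ ^ (deg i - deg j) * ‖v‖))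

/-- `f` belongs to the space `D^γ` of modelled distributions. -/
def InD (deg : ι → ℝ) (γ : ℝ) (Γ : Rd d → Rd d → ((∀ i, T i) ≃ₗ[ℝ] (∀ i, T i)))
    (f : Rd d → ∀ i, T i) : Prop :=
  (∀ (x : Rd d) (i : ι), γ ≤ deg i → f x i = 0) ∧
  (∀ K : Set (Rd d), IsCompact K → ∃ C : ℝ, ∀ i : ι, deg i < γ →
    ∀ x ∈ K, ∀ y ∈ K, ‖(f x - Γ x y (f y)) i‖ ≤ C * ‖x - y‖ ^ (γ - deg i))

/-- The defining property of the reconstruction `R f` of `f ∈ D^γ`: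
`R f` looks like `Π_x f(x)` near every point `x`, to order `γ`. -/
def Reconstructs (r : ℕ) (Pmap : Rd d → (∀ i, T i) →ₗ[ℝ] ((Rd d → ℝ) →ₗ[ℝ] ℝ))
    (γ : ℝ) (f : Rd d → ∀ i, T i) (ζ : (Rd d → ℝ) →ₗ[ℝ] ℝ) : Prop :=
  IsDistribution ζ ∧
  ∀ K : Set (Rd d), IsCompact K → ∃ C : ℝ, ∀ x ∈ K, ∀ φ ∈ Br d r,
    ∀ l : ℝ, 0 < l → l ≤ 1 →
      |ζ (scal φ x l) - Pmap x (f x) (scal φ x l)| ≤ C * l ^ γ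

end RegularityStructures

/-! ### A lattice partition of unity at every scale -/

/-- `ψ` is `C^r` and behaves like a function living at scale `l`: its `i`-th derivative is at most
`B l^{-i}` for all `i ≤ r`. -/
def AtScale {d : ℕ} (r : ℕ) (l B : ℝ) (ψ : Rd d → ℝ) : Prop :=
  ContDiff ℝ (r : ℕ∞) ψ ∧ ∀ i ≤ r, ∀ y, ‖iteratedFDeriv ℝ i ψ y‖ ≤ B * (l ^ i)⁻¹

/-- A smooth bump on `ℝ` supported in `[-1, 1]` whose integer translates sum to `1`. -/
def hat (t : ℝ) : ℝ := Real.smoothTransition (t + 1) - Real.smoothTransition t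

/-- The product bump on `ℝ^d`; the dilation by `d` puts its support inside the unit ball. -/
def eta (d : ℕ) (z : Rd d) : ℝ := ∏ i, hat (d * z i)

/-- The point of index `k` in the lattice of mesh `l / d`. -/
def latticePt {d : ℕ} (l : ℝ) (k : Fin d → ℤ) : Rd d := WithLp.toLp 2 fun i => l / d * k i

/-- The bump `eta` recentred at `x` and dilated to scale `l`. -/
def bump {d : ℕ} (x : Rd d) (l : ℝ) (y : Rd d) : ℝ := eta d (l⁻¹ • (y - x))

/-- Indices of the lattice bumps at scale `l` that can meet the ball of centre `x` and
radius `ρ`. -/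
def box {d : ℕ} (x : Rd d) (ρ l : ℝ) : Finset (Fin d → ℤ) :=
  Fintype.piFinset fun i =>
    Finset.Ico ⌊d / l * (x i - ρ)⌋ (⌈d / l * (x i + ρ)⌉ + 1)

lemma hat_contDiff {n : ℕ∞} : ContDiff ℝ n hat := by
  unfold hat
  exact (Real.smoothTransition.contDiff.comp (contDiff_id.add contDiff_const)).sub
    Real.smoothTransition.contDiff

lemma hat_eq_zero {t : ℝ} (h : 1 ≤ |t|) : hat t = 0 := by
  unfold hat
  rcases le_abs.1 h with h | h
  · rw [Real.smoothTransition.one_of_one_le h, Real.smoothTransition.one_of_one_le (by linarith)]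
    simp
  · rw [Real.smoothTransition.zero_of_nonpos (by linarith),
      Real.smoothTransition.zero_of_nonpos (by linarith)]
    simp

lemma sum_hat_telescope (t : ℝ) (a b : ℤ) (hab : a ≤ b) :
    ∑ k ∈ Finset.Ico a b, hat (t - k)
      = Real.smoothTransition (t - a + 1) - Real.smoothTransition (t - b + 1) := by
  induction b, hab using Int.leInduction with
  | base => simp
  | succ b hb ih =>
    rw [← Finset.insert_Ico_right_eq_Ico_add_one hb, Finset.sum_insert (by simp), ih]
    unfold hat
    push_cast
    rw [show t - (b + 1 : ℝ) + 1 = t - b by ring]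
    ring

lemma sum_hat (t p q : ℝ) (hp : p ≤ t) (hq : t ≤ q) :
    ∑ k ∈ Finset.Ico ⌊p⌋ (⌈q⌉ + 1), hat (t - k) = 1 := by
  have h1 := Int.floor_le p
  have h2 := Int.le_ceil q
  have h3 : ⌊p⌋ ≤ ⌈q⌉ + 1 := by
    have : (⌊p⌋ : ℝ) ≤ ⌈q⌉ := by linarith
    have : ⌊p⌋ ≤ ⌈q⌉ := by exact_mod_cast this
    omega
  rw [sum_hat_telescope t _ _ h3, Real.smoothTransition.one_of_one_le (by linarith),
    Real.smoothTransition.zero_of_nonpos (by push_cast; linarith)]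
  simp

lemma norm_le_of_coord {d : ℕ} (z : Rd d) (c : ℝ) (hc : 0 ≤ c) (h : ∀ i, |z i| ≤ c) :
    ‖z‖ ≤ d * c := by
  rw [EuclideanSpace.norm_eq]
  apply Real.sqrt_le_iff.2 ⟨by positivity, ?_⟩
  calc ∑ i, ‖z i‖ ^ 2 ≤ ∑ i : Fin d, c ^ 2 := by
        apply Finset.sum_le_sum
        intro i _
        have := h i
        rw [Real.norm_eq_abs]
        gcongr
    _ = d * c ^ 2 := by simp
    _ ≤ (d * c) ^ 2 := by
        rw [mul_pow]
        gcongr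
        have : d ≤ d ^ 2 := Nat.le_self_pow (by norm_num) d
        exact_mod_cast this

lemma coord_le_norm {d : ℕ} (z : Rd d) (i : Fin d) : |z i| ≤ ‖z‖ := by
  simpa using PiLp.norm_apply_le z i

lemma eta_contDiff (d : ℕ) {n : ℕ∞} : ContDiff ℝ n (eta d) := by
  unfold eta
  apply contDiff_prod
  intro i _
  apply hat_contDiff.comp
  fun_prop

lemma eta_support (d : ℕ) (hd : 1 ≤ d) : tsupport (eta d) ⊆ closedBall (0 : Rd d) 1 := by
  apply closure_minimal _ isClosed_closedBall
  intro z hz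
  rw [mem_closedBall_zero_iff]
  have hd' : (0 : ℝ) < d := by exact_mod_cast hd
  have := norm_le_of_coord z (1 / d) (by positivity) ?_
  · rwa [mul_one_div_cancel hd'.ne'] at this
  intro i
  by_contra! hcon
  apply hz
  apply Finset.prod_eq_zero (Finset.mem_univ i)
  apply hat_eq_zero
  rw [abs_mul, abs_of_pos hd']
  rw [div_lt_iff₀ hd'] at hcon
  linarith

lemma eta_compact (d : ℕ) (hd : 1 ≤ d) : HasCompactSupport (eta d) :=
  (isCompact_closedBall (0 : Rd d) 1).of_isClosed_subset isClosed_closure (eta_support d hd)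

lemma bump_lattice {d : ℕ} (hd : 1 ≤ d) {l : ℝ} (hl : 0 < l) (k : Fin d → ℤ) (y : Rd d) :
    bump (latticePt l k) l y = ∏ i, hat (d / l * y i - k i) := by
  have hd' : (d : ℝ) ≠ 0 := by positivity
  unfold bump eta latticePt
  apply Finset.prod_congr rfl
  intro i _
  congr 1
  simp
  field_simp

lemma coord_mem {d : ℕ} {x y : Rd d} {ρ : ℝ} (h : y ∈ closedBall x ρ) (i : Fin d) :
    x i - ρ ≤ y i ∧ y i ≤ x i + ρ := by
  rw [mem_closedBall, dist_eq_norm] at h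
  have := (coord_le_norm (y - x) i).trans h
  rw [PiLp.sub_apply, abs_le] at this
  constructor <;> linarith [this.1, this.2]

lemma sum_bump {d : ℕ} (hd : 1 ≤ d) {l : ℝ} (hl : 0 < l) (x y : Rd d) (ρ : ℝ)
    (hy : y ∈ closedBall x ρ) : ∑ k ∈ box x ρ l, bump (latticePt l k) l y = 1 := by
  simp_rw [bump_lattice hd hl]
  unfold box
  rw [← Finset.prod_univ_sum (fun i : Fin d =>
    Finset.Ico ⌊d / l * (x i - ρ)⌋ (⌈d / l * (x i + ρ)⌉ + 1))
    (fun i (k : ℤ) => hat (d / l * y i - k))]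
  apply Finset.prod_eq_one
  intro i _
  have := coord_mem hy i
  apply sum_hat
  · gcongr; exact this.1
  · gcongr; exact this.2

lemma bump_zero_of_notMem_box {d : ℕ} (hd : 1 ≤ d) {l : ℝ} (hl : 0 < l) (x y : Rd d) (ρ : ℝ)
    (hy : y ∈ closedBall x ρ) (k : Fin d → ℤ) (hk : k ∉ box x ρ l) :
    bump (latticePt l k) l y = 0 := by
  rw [bump_lattice hd hl]
  unfold box at hk
  rw [Fintype.mem_piFinset, not_forall] at hk
  obtain ⟨i, hi⟩ := hk
  apply Finset.prod_eq_zero (Finset.mem_univ i)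
  apply hat_eq_zero
  have := coord_mem hy i
  have h1 : d / l * (x i - ρ) ≤ d / l * y i := by gcongr; exact this.1
  have h2 : d / l * y i ≤ d / l * (x i + ρ) := by gcongr; exact this.2
  have h3 := Int.floor_le (d / l * (x i - ρ))
  have h4 := Int.le_ceil (d / l * (x i + ρ))
  rw [Finset.mem_Ico, not_and_or, not_le, not_lt] at hi
  rw [le_abs]
  rcases hi with hi | hi
  · left
    have : (k i : ℝ) + 1 ≤ ⌊d / l * (x i - ρ)⌋ := by exact_mod_cast hi
    linarith
  · right
    have : (⌈d / l * (x i + ρ)⌉ : ℝ) + 1 ≤ k i := by exact_mod_cast hi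
    linarith

lemma latticePt_near {d : ℕ} (hd : 1 ≤ d) {l : ℝ} (hl : 0 < l) (x : Rd d) (ρ : ℝ) (hρ : l ≤ ρ)
    (k : Fin d → ℤ) (hk : k ∈ box x ρ l) : ‖latticePt l k - x‖ ≤ 2 * d * ρ := by
  have hd' : (1 : ℝ) ≤ d := by exact_mod_cast hd
  have := norm_le_of_coord (latticePt l k - x) (2 * ρ) (by linarith) ?_
  · linarith
  intro i
  unfold box at hk
  rw [Fintype.mem_piFinset] at hk
  have hi := Finset.mem_Ico.1 (hk i)
  have h1 : (⌊d / l * (x i - ρ)⌋ : ℝ) ≤ k i := by exact_mod_cast hi.1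
  have h2 : (k i : ℝ) ≤ ⌈d / l * (x i + ρ)⌉ := by
    have := hi.2
    exact_mod_cast Int.lt_add_one_iff.1 this
  have h3 := Int.lt_floor_add_one (d / l * (x i - ρ))
  have h4 := Int.ceil_lt_add_one (d / l * (x i + ρ))
  have e : (latticePt l k - x) i = l / d * k i - x i := by simp [latticePt]
  have h5 : l / d * (d / l * (x i - ρ) - 1) ≤ l / d * k i := by gcongr; linarith
  have h6 : l / d * k i ≤ l / d * (d / l * (x i + ρ) + 1) := by gcongr; linarith
  have e5 : l / d * (d / l * (x i - ρ) - 1) = x i - ρ - l / d := by field_simp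
  have e6 : l / d * (d / l * (x i + ρ) + 1) = x i + ρ + l / d := by field_simp
  have h7 : l / d ≤ l := div_le_self hl.le hd'
  rw [e, abs_le]
  constructor <;> linarith

lemma box_card {d : ℕ} {l : ℝ} (hl : 0 < l) (x : Rd d) (ρ : ℝ) (hρ : l ≤ ρ) :
    ((box x ρ l).card : ℝ) ≤ (2 * d + 3) ^ d * (ρ / l) ^ d := by
  unfold box
  rw [Fintype.card_piFinset, ← mul_pow]
  push_cast
  have : ∀ i : Fin d, ((Finset.Ico ⌊d / l * (x i - ρ)⌋ (⌈d / l * (x i + ρ)⌉ + 1)).card : ℝ)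
      ≤ (2 * d + 3) * (ρ / l) := by
    intro i
    have h3 := Int.lt_floor_add_one (d / l * (x i - ρ))
    have h4 := Int.ceil_lt_add_one (d / l * (x i + ρ))
    have h1 : 1 ≤ ρ / l := (one_le_div hl).2 hρ
    have e : d / l * (x i + ρ) - d / l * (x i - ρ) = 2 * d * (ρ / l) := by ring
    have h0 : ⌊d / l * (x i - ρ)⌋ ≤ ⌈d / l * (x i + ρ)⌉ + 1 := by
      have h5 := Int.floor_le (d / l * (x i - ρ))
      have h6 := Int.le_ceil (d / l * (x i + ρ))
      have h7 : 0 ≤ 2 * d * (ρ / l) := by positivity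
      have : (⌊d / l * (x i - ρ)⌋ : ℝ) ≤ (⌈d / l * (x i + ρ)⌉ : ℝ) + 1 := by linarith
      exact_mod_cast this
    have e2 : ((Finset.Ico ⌊d / l * (x i - ρ)⌋ (⌈d / l * (x i + ρ)⌉ + 1)).card : ℝ)
        = (⌈d / l * (x i + ρ)⌉ : ℝ) + 1 - ⌊d / l * (x i - ρ)⌋ := by
      rw [Int.card_Ico]
      have := Int.toNat_of_nonneg (sub_nonneg.2 h0)
      exact_mod_cast congrArg (fun z : ℤ => (z : ℝ)) this
    rw [e2]
    nlinarith
  calc _ ≤ ∏ i : Fin d, (2 * d + 3) * (ρ / l) := by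
        apply Finset.prod_le_prod
        · intros; positivity
        · intro i _; exact this i
    _ = _ := by simp

/-! ### Functions at a given scale and their localisation -/

lemma AtScale.mono {d r : ℕ} {l l' B : ℝ} {ψ : Rd d → ℝ} (h : AtScale r l B ψ) (hB : 0 ≤ B)
    (hl' : 0 < l') (hl : l' ≤ l) : AtScale r l' B ψ := by
  refine ⟨h.1, fun i hi y => (h.2 i hi y).trans ?_⟩
  gcongr

lemma iteratedFDeriv_affine {d r : ℕ} {ψ : Rd d → ℝ} (h : ContDiff ℝ (r : ℕ∞) ψ) (a : ℝ)
    (x : Rd d) (i : ℕ) (hi : i ≤ r) (z : Rd d) :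
    iteratedFDeriv ℝ i (fun z => ψ (x + a • z)) z = a ^ i • iteratedFDeriv ℝ i ψ (x + a • z) := by
  have h' : ContDiff ℝ i (fun z => ψ (x + z)) :=
    (h.of_le (by exact_mod_cast hi)).comp (contDiff_const.add contDiff_id)
  rw [iteratedFDeriv_comp_const_smul a h']
  simp only [iteratedFDeriv_comp_add_left]

lemma contDiff_affine {d r : ℕ} {ψ : Rd d → ℝ} (h : ContDiff ℝ (r : ℕ∞) ψ) (a : ℝ)
    (x : Rd d) : ContDiff ℝ (r : ℕ∞) (fun z => ψ (x + a • z)) :=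
  h.comp (by fun_prop)

lemma exists_deriv_bound {d r : ℕ} {ψ : Rd d → ℝ} (h : ContDiff ℝ (r : ℕ∞) ψ)
    (hc : HasCompactSupport ψ) :
    ∃ B : ℝ, 0 ≤ B ∧ ∀ i ≤ r, ∀ y, ‖iteratedFDeriv ℝ i ψ y‖ ≤ B := by
  have : ∀ i : ℕ, ∃ C : ℝ, i ≤ r → ∀ y, ‖iteratedFDeriv ℝ i ψ y‖ ≤ C := by
    intro i
    by_cases hi : i ≤ r
    · obtain ⟨C, hC⟩ := (hc.iteratedFDeriv (𝕜 := ℝ) i).exists_bound_of_continuous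
        (h.continuous_iteratedFDeriv (by exact_mod_cast hi))
      exact ⟨C, fun _ => hC⟩
    · exact ⟨0, fun h => absurd h hi⟩
  choose C hC using this
  refine ⟨∑ i ∈ Finset.range (r + 1), |C i|, by positivity, fun i hi y => ?_⟩
  calc _ ≤ C i := hC i hi y
    _ ≤ |C i| := le_abs_self _
    _ ≤ _ := Finset.single_le_sum (f := fun i => |C i|) (fun _ _ => abs_nonneg _)
        (Finset.mem_range.2 (by omega))

/-- Multiplying a function at scale `l` by `bump x l` gives, after zooming in at `x`, a function
whose derivatives are controlled by a constant depending on `d` and `r` only. -/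
lemma exists_zoom_bound (d r : ℕ) (hd : 1 ≤ d) : ∃ M : ℝ, 0 < M ∧
    ∀ (l B : ℝ) (ψ : Rd d → ℝ) (x : Rd d), 0 < l → 0 ≤ B → AtScale r l B ψ →
      ∀ i ≤ r, ∀ z, ‖iteratedFDeriv ℝ i (fun z => ψ (x + l • z) * eta d z) z‖ ≤ M * B := by
  obtain ⟨C, hC0, hC⟩ := exists_deriv_bound (r := r) (eta_contDiff d) (eta_compact d hd)
  refine ⟨2 ^ r * (C + 1), by positivity, fun l B ψ x hl hB hψ i hi z => ?_⟩
  have h1 : ∀ j ≤ r, ‖iteratedFDeriv ℝ j (fun z => ψ (x + l • z)) z‖ ≤ B := by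
    intro j hj
    rw [iteratedFDeriv_affine hψ.1 l x j hj, norm_smul, norm_pow, Real.norm_of_nonneg hl.le]
    calc _ ≤ l ^ j * (B * (l ^ j)⁻¹) := by gcongr; exact hψ.2 j hj _
      _ = B := by field_simp
  calc _ ≤ ∑ j ∈ Finset.range (i + 1), (i.choose j : ℝ) *
          ‖iteratedFDeriv ℝ j (fun z => ψ (x + l • z)) z‖ * ‖iteratedFDeriv ℝ (i - j) (eta d) z‖ :=
        norm_iteratedFDeriv_mul_le (contDiff_affine hψ.1 l x) (eta_contDiff d (n := r)) z
          (by exact_mod_cast hi)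
    _ ≤ ∑ j ∈ Finset.range (i + 1), (i.choose j : ℝ) * B * C := by
        apply Finset.sum_le_sum
        intro j hj
        have := Finset.mem_range.1 hj
        gcongr
        · exact h1 j (by omega)
        · exact hC (i - j) (by omega) z
    _ = 2 ^ i * B * C := by
        rw [← Finset.sum_mul, ← Finset.sum_mul]
        congr 2
        exact_mod_cast Nat.sum_range_choose i
    _ ≤ 2 ^ r * B * (C + 1) := by
        gcongr
        · norm_num
        · linarith
    _ = _ := by ring

lemma unzoom {d : ℕ} (ψ : Rd d → ℝ) (x : Rd d) {l : ℝ} (hl : 0 < l) (y : Rd d) :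
    ψ y * bump x l y = (fun z => ψ (x + l • z) * eta d z) (-(l⁻¹ • x) + l⁻¹ • y) := by
  have e : -(l⁻¹ • x) + l⁻¹ • y = l⁻¹ • (y - x) := by rw [smul_sub]; abel
  simp only [e, bump]
  rw [smul_inv_smul₀ hl.ne']
  simp

lemma bump_support {d : ℕ} (hd : 1 ≤ d) (x : Rd d) {l : ℝ} (hl : 0 < l) (y : Rd d)
    (hy : bump x l y ≠ 0) : y ∈ closedBall x l := by
  have : l⁻¹ • (y - x) ∈ closedBall (0 : Rd d) 1 := eta_support d hd (subset_tsupport _ hy)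
  rw [mem_closedBall_zero_iff, norm_smul, norm_inv, Real.norm_of_nonneg hl.le] at this
  rw [mem_closedBall, dist_eq_norm]
  rwa [inv_mul_le_iff₀ hl, mul_one] at this

/-- Localisation: `ψ * bump x l` is again at scale `l`, and up to the factor `M * B * l ^ d` it is
a rescaled element of `B_r`, so functionals controlled on the latter control it. -/
lemma exists_localise (d r : ℕ) (hd : 1 ≤ d) : ∃ M : ℝ, 0 < M ∧
    ∀ (l B : ℝ) (ψ : Rd d → ℝ) (x : Rd d), 0 < l → 0 ≤ B → AtScale r l B ψ →
      AtScale r l (M * B) (ψ * bump x l) ∧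
      ∀ (u : (Rd d → ℝ) →ₗ[ℝ] ℝ) (A : ℝ), (∀ φ ∈ Br d r, |u (scal φ x l)| ≤ A) →
        |u (ψ * bump x l)| ≤ M * B * l ^ d * A := by
  obtain ⟨M, hM, hMb⟩ := exists_zoom_bound d r hd
  refine ⟨M, hM, fun l B ψ x hl hB hψ => ⟨?_, ?_⟩⟩
  · have hc : ContDiff ℝ (r : ℕ∞) (fun z => ψ (x + l • z) * eta d z) :=
      (contDiff_affine hψ.1 l x).mul (eta_contDiff d)
    have e : ψ * bump x l = fun y => (fun z => ψ (x + l • z) * eta d z)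
        (-(l⁻¹ • x) + l⁻¹ • y) := by
      ext y
      exact unzoom ψ x hl y
    rw [e]
    refine ⟨contDiff_affine hc _ _, fun i hi y => ?_⟩
    rw [iteratedFDeriv_affine hc _ _ i hi, norm_smul, norm_pow, norm_inv,
      Real.norm_of_nonneg hl.le, inv_pow, mul_comm]
    gcongr
    exact hMb l B ψ x hl hB hψ i hi _
  · intro u A hA
    rcases hB.eq_or_lt with rfl | hB
    · have : ψ = 0 := by
        ext y
        simpa using hψ.2 0 (Nat.zero_le _) y
      simp [this]
    · have hMB : 0 < M * B := by positivity
      set φ : Rd d → ℝ := (M * B)⁻¹ • (fun z => ψ (x + l • z) * eta d z) with hφ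
      have hc : ContDiff ℝ (r : ℕ∞) (fun z => ψ (x + l • z) * eta d z) :=
        (contDiff_affine hψ.1 l x).mul (eta_contDiff d)
      have hφr : φ ∈ Br d r := by
        refine ⟨contDiff_const.smul hc, ?_, fun i hi y => ?_⟩
        · refine (closure_mono ?_).trans (eta_support d hd)
          intro z hz
          simp only [hφ, Function.mem_support, Pi.smul_apply, smul_eq_mul] at hz ⊢
          exact right_ne_zero_of_mul (right_ne_zero_of_mul hz)
        · rw [hφ, iteratedFDeriv_const_smul_apply
            (hc.of_le (by exact_mod_cast hi)).contDiffAt, norm_smul, norm_inv,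
            Real.norm_of_nonneg hMB.le, inv_mul_le_iff₀ hMB, mul_one]
          exact hMb l B ψ x hl hB.le hψ i hi _
      have e : ψ * bump x l = (M * B * l ^ d) • scal φ x l := by
        ext y
        have hne : l ^ d ≠ 0 := by positivity
        have e1 := unzoom ψ x hl y
        rw [show -(l⁻¹ • x) + l⁻¹ • y = l⁻¹ • (y - x) by rw [smul_sub]; abel] at e1
        simp only [Pi.mul_apply, Pi.smul_apply, scal, hφ, smul_eq_mul, e1]
        field_simp
      rw [e, map_smul, smul_eq_mul, abs_mul, abs_of_pos (by positivity)]
      gcongr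
      exact hA φ hφr

/-- Resolution of a compactly supported function along the lattice bumps at scale `l`. -/
lemma eq_sum_bump {d : ℕ} (hd : 1 ≤ d) {l : ℝ} (hl : 0 < l) (x : Rd d) (ρ : ℝ) (ψ : Rd d → ℝ)
    (hψ : Function.support ψ ⊆ closedBall x ρ) :
    ψ = ∑ k ∈ box x ρ l, ψ * bump (latticePt l k) l := by
  ext y
  rw [Finset.sum_apply]
  simp only [Pi.mul_apply]
  rw [← Finset.mul_sum]
  by_cases hy : ψ y = 0
  · simp [hy]
  · rw [sum_bump hd hl x y ρ (hψ hy), mul_one]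

/-! ### Reconstruction of coherent germs -/

/-- A germ `x ↦ F x` of functionals is coherent of order `γ` if functionals attached to points at
distance `O(l)` agree up to `O(l ^ γ)` on test functions at scale `l`, locally uniformly. -/
def Coherent {d : ℕ} (r : ℕ) (γ : ℝ) (F : Rd d → (Rd d → ℝ) →ₗ[ℝ] ℝ) : Prop :=
  ∀ P c : ℝ, 0 ≤ c → ∃ C : ℝ, 0 ≤ C ∧ ∀ x y : Rd d, ‖x‖ ≤ P → ‖y‖ ≤ P →
    ∀ l : ℝ, 0 < l → l ≤ 1 → ‖x - y‖ ≤ c * l → ∀ φ ∈ Br d r,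
      |F x (scal φ x l) - F y (scal φ x l)| ≤ C * l ^ γ

/-- The approximate reconstruction at scale `l`: the functionals of the germ at the lattice points,
glued by the lattice bumps. The sum is finite on functions with bounded support. -/
def glue {d : ℕ} (F : Rd d → (Rd d → ℝ) →ₗ[ℝ] ℝ) (l : ℝ) (ψ : Rd d → ℝ) : ℝ :=
  ∑ᶠ k : Fin d → ℤ, F (latticePt l k) (ψ * bump (latticePt l k) l)

lemma glue_support {d : ℕ} (hd : 1 ≤ d) (F : Rd d → (Rd d → ℝ) →ₗ[ℝ] ℝ) {l : ℝ} (hl : 0 < l)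
    (x : Rd d) (ρ : ℝ) (ψ : Rd d → ℝ) (hψ : Function.support ψ ⊆ closedBall x ρ) :
    (Function.support fun k => F (latticePt l k) (ψ * bump (latticePt l k) l)) ⊆ box x ρ l := by
  intro k hk
  by_contra hk'
  apply hk
  have : ψ * bump (latticePt l k) l = 0 := by
    ext y
    by_cases hy : ψ y = 0
    · simp [hy]
    · simp [bump_zero_of_notMem_box hd hl x y ρ (hψ hy) k hk']
  simp only [this, map_zero]

lemma glue_eq {d : ℕ} (hd : 1 ≤ d) (F : Rd d → (Rd d → ℝ) →ₗ[ℝ] ℝ) {l : ℝ} (hl : 0 < l)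
    (x : Rd d) (ρ : ℝ) (ψ : Rd d → ℝ) (hψ : Function.support ψ ⊆ closedBall x ρ) :
    glue F l ψ = ∑ k ∈ box x ρ l, F (latticePt l k) (ψ * bump (latticePt l k) l) :=
  finsum_eq_sum_of_support_subset _ (glue_support hd F hl x ρ ψ hψ)

lemma glue_sum {d : ℕ} (hd : 1 ≤ d) (F : Rd d → (Rd d → ℝ) →ₗ[ℝ] ℝ) {l : ℝ} (hl : 0 < l)
    (x : Rd d) (ρ : ℝ) {κ : Type} (s : Finset κ) (g : κ → Rd d → ℝ)
    (hg : ∀ k ∈ s, Function.support (g k) ⊆ closedBall x ρ) :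
    glue F l (∑ k ∈ s, g k) = ∑ k ∈ s, glue F l (g k) := by
  have h : Function.support (∑ k ∈ s, g k) ⊆ closedBall x ρ := by
    intro y hy
    rw [Function.mem_support, Finset.sum_apply] at hy
    obtain ⟨k, hk, hky⟩ := Finset.exists_ne_zero_of_sum_ne_zero hy
    exact hg k hk hky
  rw [glue_eq hd F hl x ρ _ h, Finset.sum_congr rfl fun k hk => glue_eq hd F hl x ρ _ (hg k hk),
    Finset.sum_comm]
  simp only [Finset.sum_mul, map_sum]

/-- On functions at scale `l` supported in a ball of comparable radius around `x`, the glued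
functional is close to the functional attached to `x`. -/
lemma glue_near {d r : ℕ} (hd : 1 ≤ d) {γ : ℝ} {F : Rd d → (Rd d → ℝ) →ₗ[ℝ] ℝ}
    (hF : Coherent r γ F) (P c : ℝ) (hc : 0 ≤ c) : ∃ C : ℝ, 0 ≤ C ∧
    ∀ (x : Rd d) (l ρ B : ℝ) (ψ : Rd d → ℝ), ‖x‖ ≤ P → 0 < l → l ≤ 1 → l ≤ ρ → ρ ≤ c * l →
      0 ≤ B → AtScale r l B ψ → Function.support ψ ⊆ closedBall x ρ →
      |F x ψ - glue F l ψ| ≤ C * B * l ^ d * l ^ γ := by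
  obtain ⟨M, hM, hloc⟩ := exists_localise d r hd
  obtain ⟨A, hA0, hA⟩ := hF (P + 2 * d * c) (2 * d * c) (by positivity)
  refine ⟨(2 * d + 3) ^ d * c ^ d * (M * A), by positivity, ?_⟩
  intro x l ρ B ψ hx hl hl1 hlρ hρc hB hψ hsupp
  have hterm : ∀ k ∈ box x ρ l, |(F x - F (latticePt l k)) (ψ * bump (latticePt l k) l)|
      ≤ M * B * l ^ d * (A * l ^ γ) := by
    intro k hk
    have h1 := latticePt_near hd hl x ρ hlρ k hk
    have h2 : 2 * d * ρ ≤ 2 * d * c * l := by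
      calc 2 * d * ρ ≤ 2 * d * (c * l) := by gcongr
        _ = _ := by ring
    have h3 : 2 * d * c * l ≤ 2 * d * c := mul_le_of_le_one_right (by positivity) hl1
    have h4 : 0 ≤ 2 * d * c := by positivity
    have h5 : ‖latticePt l k‖ ≤ ‖latticePt l k - x‖ + ‖x‖ := by
      simpa using norm_add_le (latticePt l k - x) x
    refine (hloc l B ψ (latticePt l k) hl hB hψ).2 _ _ fun φ hφ => ?_
    have := hA (latticePt l k) x (by linarith) (by linarith) l hl hl1 (h1.trans h2) φ hφ
    rwa [abs_sub_comm] at this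
  have e : F x ψ - glue F l ψ
      = ∑ k ∈ box x ρ l, (F x - F (latticePt l k)) (ψ * bump (latticePt l k) l) := by
    rw [glue_eq hd F hl x ρ ψ hsupp]
    nth_rewrite 1 [eq_sum_bump hd hl x ρ ψ hsupp]
    simp only [map_sum, LinearMap.sub_apply, Finset.sum_sub_distrib]
  rw [e]
  calc _ ≤ ∑ k ∈ box x ρ l, |(F x - F (latticePt l k)) (ψ * bump (latticePt l k) l)| :=
        Finset.abs_sum_le_sum_abs _ _
    _ ≤ (box x ρ l).card • (M * B * l ^ d * (A * l ^ γ)) := Finset.sum_le_card_nsmul _ _ _ hterm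
    _ ≤ ((2 * d + 3) ^ d * c ^ d) * (M * B * l ^ d * (A * l ^ γ)) := by
        rw [nsmul_eq_mul]
        gcongr
        refine (box_card hl x ρ hlρ).trans ?_
        have : 0 ≤ ρ := by linarith
        gcongr
        exact (div_le_iff₀ hl).2 hρc
    _ = _ := by ring

lemma mul_bump_support {d : ℕ} (hd : 1 ≤ d) (x : Rd d) {l : ℝ} (hl : 0 < l) (ψ : Rd d → ℝ) :
    Function.support (ψ * bump x l) ⊆ closedBall x l := by
  intro y hy
  exact bump_support hd x hl y (right_ne_zero_of_mul hy)

/-- Consecutive dyadic approximations differ by `O(l ^ γ)`: `ψ` is cut along the bumps at scale `l`,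
and `glue_near` at scale `l / 2` is applied to each piece. -/
lemma glue_half {d r : ℕ} (hd : 1 ≤ d) {γ : ℝ} (hγ : 0 < γ) {F : Rd d → (Rd d → ℝ) →ₗ[ℝ] ℝ}
    (hF : Coherent r γ F) (P : ℝ) : ∃ C : ℝ, 0 ≤ C ∧
    ∀ (x : Rd d) (l ρ B : ℝ) (ψ : Rd d → ℝ), ‖x‖ ≤ P → 0 < l → l ≤ 1 → l ≤ ρ → ρ ≤ P →
      0 ≤ B → AtScale r l B ψ → Function.support ψ ⊆ closedBall x ρ →
      |glue F l ψ - glue F (l / 2) ψ| ≤ C * B * ρ ^ d * l ^ γ := by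
  obtain ⟨M, hM, hloc⟩ := exists_localise d r hd
  obtain ⟨A, hA0, hA⟩ := glue_near hd hF (P + 2 * d * P) 2 (by norm_num)
  refine ⟨(2 * d + 3) ^ d * (A * M), by positivity, ?_⟩
  intro x l ρ B ψ hx hl hl1 hlρ hρP hB hψ hsupp
  have hterm : ∀ k ∈ box x ρ l, |F (latticePt l k) (ψ * bump (latticePt l k) l)
      - glue F (l / 2) (ψ * bump (latticePt l k) l)| ≤ A * (M * B) * l ^ d * l ^ γ := by
    intro k hk
    have h1 := latticePt_near hd hl x ρ hlρ k hk
    have h2 : 2 * d * ρ ≤ 2 * d * P := by gcongr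
    have h5 : ‖latticePt l k‖ ≤ ‖latticePt l k - x‖ + ‖x‖ := by
      simpa using norm_add_le (latticePt l k - x) x
    refine (hA (latticePt l k) (l / 2) l (M * B) _ (by linarith) (by linarith) (by linarith)
      (by linarith) (by linarith) (by positivity)
      ((hloc l B ψ (latticePt l k) hl hB hψ).1.mono (by positivity) (by linarith) (by linarith))
      (mul_bump_support hd _ hl ψ)).trans ?_
    gcongr
    · linarith
    · linarith
  have e : glue F l ψ - glue F (l / 2) ψ
      = ∑ k ∈ box x ρ l, (F (latticePt l k) (ψ * bump (latticePt l k) l)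
      - glue F (l / 2) (ψ * bump (latticePt l k) l)) := by
    rw [Finset.sum_sub_distrib, ← glue_eq hd F hl x ρ ψ hsupp, ← glue_sum hd F (half_pos hl) x ρ,
      ← eq_sum_bump hd hl x ρ ψ hsupp]
    intro k _ y hy
    exact hsupp (left_ne_zero_of_mul hy)
  rw [e]
  calc _ ≤ ∑ k ∈ box x ρ l, |_| := Finset.abs_sum_le_sum_abs _ _
    _ ≤ (box x ρ l).card • (A * (M * B) * l ^ d * l ^ γ) := Finset.sum_le_card_nsmul _ _ _ hterm
    _ ≤ ((2 * d + 3) ^ d * (ρ / l) ^ d) * (A * (M * B) * l ^ d * l ^ γ) := by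
        rw [nsmul_eq_mul]
        gcongr
        exact box_card hl x ρ hlρ
    _ = _ := by
        rw [div_pow]
        field_simp

/-- The dyadic approximations converge, at a geometric rate from the scale of `ψ` on. -/
lemma glue_limit {d r : ℕ} (hd : 1 ≤ d) {γ : ℝ} (hγ : 0 < γ) {F : Rd d → (Rd d → ℝ) →ₗ[ℝ] ℝ}
    (hF : Coherent r γ F) (P : ℝ) : ∃ C : ℝ, 0 ≤ C ∧
    ∀ (x : Rd d) (m : ℕ) (ρ B : ℝ) (ψ : Rd d → ℝ), ‖x‖ ≤ P → (1 / 2) ^ m ≤ ρ → ρ ≤ P →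
      0 ≤ B → AtScale r ((1 / 2) ^ m) B ψ → Function.support ψ ⊆ closedBall x ρ →
      ∃ a : ℝ, Tendsto (fun n : ℕ => glue F ((1 / 2) ^ n) ψ) atTop (nhds a) ∧
        |glue F ((1 / 2) ^ m) ψ - a| ≤ C * B * ρ ^ d * (((1 : ℝ) / 2) ^ m) ^ γ := by
  obtain ⟨A, hA0, hA⟩ := glue_half hd hγ hF P
  have hq : ((1 : ℝ) / 2) ^ γ < 1 := Real.rpow_lt_one (by norm_num) (by norm_num) hγ
  refine ⟨A / (1 - (1 / 2) ^ γ), div_nonneg hA0 (by linarith), ?_⟩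
  intro x m ρ B ψ hx hmρ hρP hB hψ hsupp
  set u : ℕ → ℝ := fun n => glue F ((1 / 2) ^ (n + m)) ψ with hu
  have hstep : ∀ n, dist (u n) (u (n + 1))
      ≤ (A * B * ρ ^ d * (((1 : ℝ) / 2) ^ m) ^ γ) * (((1 : ℝ) / 2) ^ γ) ^ n := by
    intro n
    have hle : ((1 : ℝ) / 2) ^ (n + m) ≤ (1 / 2) ^ m :=
      pow_le_pow_of_le_one (by norm_num) (by norm_num) (by omega)
    have := hA x ((1 / 2) ^ (n + m)) ρ B ψ hx (by positivity)
      (pow_le_one₀ (by norm_num) (by norm_num)) (hle.trans hmρ) hρP hB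
      (hψ.mono hB (by positivity) hle) hsupp
    rw [Real.dist_eq]
    simp only [hu]
    rw [show ((1 : ℝ) / 2) ^ (n + 1 + m) = (1 / 2) ^ (n + m) / 2 by ring]
    refine this.trans (le_of_eq ?_)
    rw [pow_add, Real.mul_rpow (by positivity) (by positivity), ← Real.rpow_pow_comm (by norm_num)]
    ring
  obtain ⟨a, ha⟩ := cauchySeq_tendsto_of_complete (cauchySeq_of_le_geometric _ _ hq hstep)
  refine ⟨a, (tendsto_add_atTop_iff_nat m).1 ha, ?_⟩
  have := dist_le_of_le_geometric_of_tendsto₀ _ _ hq hstep ha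
  rw [Real.dist_eq] at this
  simp only [hu, zero_add] at this
  refine this.trans (le_of_eq ?_)
  ring

/-! ### The limit functional -/

/-- The space of compactly supported `C^r` functions. -/
def Crc (d r : ℕ) : Submodule ℝ (Rd d → ℝ) where
  carrier := {ψ | ContDiff ℝ (r : ℕ∞) ψ ∧ HasCompactSupport ψ}
  add_mem' h h' := ⟨h.1.add h'.1, h.2.add h'.2⟩
  zero_mem' := ⟨contDiff_const, HasCompactSupport.zero⟩
  smul_mem' _ _ h := ⟨contDiff_const.smul h.1, h.2.smul_left⟩

lemma Crc_bounds {d r : ℕ} {ψ : Rd d → ℝ} (h : ψ ∈ Crc d r) : ∃ P B : ℝ, 1 ≤ P ∧ 0 ≤ B ∧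
    AtScale r 1 B ψ ∧ Function.support ψ ⊆ closedBall 0 P := by
  obtain ⟨B, hB, hBb⟩ := exists_deriv_bound h.1 h.2
  obtain ⟨P, hP⟩ := h.2.isCompact.isBounded.subset_closedBall (0 : Rd d)
  refine ⟨max P 1, B, le_max_right _ _, hB, ⟨h.1, fun i hi y => by simpa using hBb i hi y⟩, ?_⟩
  exact (subset_tsupport ψ).trans (hP.trans (closedBall_subset_closedBall (le_max_left _ _)))

lemma exists_limit_functional {d r : ℕ} (hd : 1 ≤ d) {γ : ℝ} (hγ : 0 < γ)
    {F : Rd d → (Rd d → ℝ) →ₗ[ℝ] ℝ} (hF : Coherent r γ F) :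
    ∃ L : Crc d r →ₗ[ℝ] ℝ, ∀ ψ : Crc d r,
      Tendsto (fun n : ℕ => glue F ((1 / 2) ^ n) (ψ : Rd d → ℝ)) atTop (nhds (L ψ)) := by
  have hex : ∀ ψ : Crc d r, ∃ a : ℝ,
      Tendsto (fun n : ℕ => glue F ((1 / 2) ^ n) (ψ : Rd d → ℝ)) atTop (nhds a) := by
    intro ψ
    obtain ⟨P, B, hP, hB, hs, hsupp⟩ := Crc_bounds ψ.2
    obtain ⟨C, _, hC⟩ := glue_limit hd hγ hF P
    obtain ⟨a, ha, _⟩ := hC 0 0 P B ψ (by simpa using by linarith) (by simpa using hP) le_rfl hB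
      (by simpa using hs) hsupp
    exact ⟨a, ha⟩
  choose a ha using hex
  have hfin : ∀ (ψ : Crc d r) (n : ℕ), (Function.support fun k : Fin d → ℤ =>
      F (latticePt ((1 / 2) ^ n) k)
        ((ψ : Rd d → ℝ) * bump (latticePt ((1 / 2) ^ n) k) ((1 / 2) ^ n))).Finite := by
    intro ψ n
    obtain ⟨P, B, hP, hB, hs, hsupp⟩ := Crc_bounds ψ.2
    exact (box (0 : Rd d) P ((1 / 2) ^ n)).finite_toSet.subset
      (glue_support hd F (by positivity) 0 P ψ hsupp)
  refine ⟨{ toFun := a, map_add' := ?_, map_smul' := ?_ }, ha⟩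
  · intro ψ ψ'
    refine tendsto_nhds_unique (ha (ψ + ψ')) (((ha ψ).add (ha ψ')).congr fun n => ?_)
    unfold glue
    rw [← finsum_add_distrib (hfin ψ n) (hfin ψ' n)]
    simp [add_mul]
  · intro c ψ
    refine tendsto_nhds_unique (ha (c • ψ)) (((ha ψ).const_mul c).congr fun n => ?_)
    unfold glue
    rw [mul_finsum]
    simp

lemma scal_affine {d : ℕ} (φ : Rd d → ℝ) (x : Rd d) (l : ℝ) :
    scal φ x l = (l ^ d)⁻¹ • fun y => φ (-(l⁻¹ • x) + l⁻¹ • y) := by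
  ext y
  have e : -(l⁻¹ • x) + l⁻¹ • y = l⁻¹ • (y - x) := by rw [smul_sub]; abel
  simp [scal, e]

lemma scal_atScale {d r : ℕ} {φ : Rd d → ℝ} (hφ : φ ∈ Br d r) (x : Rd d) {l : ℝ} (hl : 0 < l) :
    AtScale r l (l ^ d)⁻¹ (scal φ x l) := by
  have hc := contDiff_affine hφ.1 l⁻¹ (-(l⁻¹ • x))
  rw [scal_affine]
  refine ⟨contDiff_const.smul hc, fun i hi y => ?_⟩
  rw [iteratedFDeriv_const_smul_apply (hc.of_le (by exact_mod_cast hi)).contDiffAt,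
    iteratedFDeriv_affine hφ.1 _ _ i hi, norm_smul, norm_smul, norm_inv, norm_pow, norm_pow,
    norm_inv, Real.norm_of_nonneg hl.le, inv_pow]
  gcongr
  exact mul_le_of_le_one_right (by positivity) (hφ.2.2 i hi _)

lemma scal_support {d r : ℕ} {φ : Rd d → ℝ} (hφ : φ ∈ Br d r) (x : Rd d) {l : ℝ} (hl : 0 < l) :
    Function.support (scal φ x l) ⊆ closedBall x l := by
  intro y hy
  have : l⁻¹ • (y - x) ∈ closedBall (0 : Rd d) 1 :=
    hφ.2.1 (subset_tsupport _ (right_ne_zero_of_mul hy))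
  rw [mem_closedBall_zero_iff, norm_smul, norm_inv, Real.norm_of_nonneg hl.le] at this
  rw [mem_closedBall, dist_eq_norm]
  rwa [inv_mul_le_iff₀ hl, mul_one] at this

lemma scal_mem_Crc {d r : ℕ} {φ : Rd d → ℝ} (hφ : φ ∈ Br d r) (x : Rd d) {l : ℝ} (hl : 0 < l) :
    scal φ x l ∈ Crc d r :=
  ⟨(scal_atScale hφ x hl).1, HasCompactSupport.intro' (isCompact_closedBall x l)
    isClosed_closedBall fun y hy => by
      by_contra h
      exact hy (scal_support hφ x hl h)⟩

/-- The limit functional looks like `F x` near `x`, to order `γ`. -/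
lemma limit_near {d r : ℕ} (hd : 1 ≤ d) {γ : ℝ} (hγ : 0 < γ)
    {F : Rd d → (Rd d → ℝ) →ₗ[ℝ] ℝ} (hF : Coherent r γ F) (ζ : (Rd d → ℝ) →ₗ[ℝ] ℝ)
    (hζ : ∀ ψ ∈ Crc d r, Tendsto (fun n : ℕ => glue F ((1 / 2) ^ n) ψ) atTop (nhds (ζ ψ)))
    (P : ℝ) (hP : 1 ≤ P) : ∃ C : ℝ, ∀ x : Rd d, ‖x‖ ≤ P → ∀ φ ∈ Br d r, ∀ l : ℝ, 0 < l → l ≤ 1 →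
      |ζ (scal φ x l) - F x (scal φ x l)| ≤ C * l ^ γ := by
  obtain ⟨A, hA0, hA⟩ := glue_near hd hF P 2 (by norm_num)
  obtain ⟨C, hC0, hC⟩ := glue_limit hd hγ hF P
  refine ⟨A + C, fun x hx φ hφ l hl hl1 => ?_⟩
  -- The dyadic scale just below `l`.
  obtain ⟨n, hn1, hn2⟩ := exists_nat_pow_near_of_lt_one hl hl1
    (show (0 : ℝ) < 1 / 2 by norm_num) (by norm_num)
  have hn2' : l ≤ 2 * (1 / 2) ^ (n + 1) := by rw [pow_succ]; linarith
  have hm : (0 : ℝ) < (1 / 2) ^ (n + 1) := by positivity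
  have hB : 0 ≤ (l ^ d)⁻¹ := by positivity
  have hs := (scal_atScale hφ x hl).mono hB hm hn1.le
  have h1 := hA x _ l _ _ hx hm (by linarith) hn1.le hn2' hB hs (scal_support hφ x hl)
  obtain ⟨a, ha, h2⟩ := hC x (n + 1) l _ _ hx hn1.le (by linarith) hB hs (scal_support hφ x hl)
  rw [tendsto_nhds_unique ha (hζ _ (scal_mem_Crc hφ x hl))] at h2
  have h1' : A * (l ^ d)⁻¹ * ((1 / 2) ^ (n + 1)) ^ d * (((1 : ℝ) / 2) ^ (n + 1)) ^ γ
      ≤ A * l ^ γ := by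
    calc _ ≤ A * (l ^ d)⁻¹ * l ^ d * l ^ γ := by gcongr
      _ = _ := by field_simp
  have h2' : C * (l ^ d)⁻¹ * l ^ d * (((1 : ℝ) / 2) ^ (n + 1)) ^ γ ≤ C * l ^ γ := by
    calc _ ≤ C * (l ^ d)⁻¹ * l ^ d * l ^ γ := by gcongr
      _ = _ := by field_simp
  have h3 := abs_sub_le (F x (scal φ x l)) (glue F ((1 / 2) ^ (n + 1)) (scal φ x l))
    (ζ (scal φ x l))
  rw [abs_sub_comm, add_mul]
  linarith

/-- The bound by the `C^r` norm follows from the first approximation `glue F 1`, which only involves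
finitely many of the functionals `F x`, and the distance of the limit to it. -/
lemma limit_isDistribution {d r : ℕ} (hd : 1 ≤ d) {γ : ℝ} (hγ : 0 < γ)
    {F : Rd d → (Rd d → ℝ) →ₗ[ℝ] ℝ} (hF : Coherent r γ F)
    (hF1 : ∀ x, ∃ A : ℝ, ∀ φ ∈ Br d r, |F x (scal φ x 1)| ≤ A)
    (ζ : (Rd d → ℝ) →ₗ[ℝ] ℝ)
    (hζ : ∀ ψ ∈ Crc d r, Tendsto (fun n : ℕ => glue F ((1 / 2) ^ n) ψ) atTop (nhds (ζ ψ))) :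
    IsDistribution ζ := by
  intro K hK
  obtain ⟨P', hP'⟩ := hK.isBounded.subset_closedBall (0 : Rd d)
  set P := max P' 1
  have hP1 : 1 ≤ P := le_max_right _ _
  have hKP : K ⊆ closedBall 0 P := hP'.trans (closedBall_subset_closedBall (le_max_left _ _))
  obtain ⟨M, hM, hloc⟩ := exists_localise d r hd
  obtain ⟨C, hC0, hC⟩ := glue_limit hd hγ hF P
  choose A hA using hF1
  refine ⟨C * P ^ d + ∑ k ∈ box (0 : Rd d) P 1, M * A (latticePt 1 k), r, ?_⟩
  intro ψ hψ hsupp B hBb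
  have hB : 0 ≤ B := (norm_nonneg _).trans (hBb 0 (Nat.zero_le _) 0)
  have hr : ContDiff ℝ (r : ℕ∞) ψ := hψ.1.of_le (by exact_mod_cast le_top)
  have hs : AtScale r 1 B ψ := ⟨hr, fun i hi y => by simpa using hBb i hi y⟩
  have hsupp' : Function.support ψ ⊆ closedBall 0 P :=
    (subset_tsupport ψ).trans (hsupp.trans hKP)
  obtain ⟨a, ha, h2⟩ := hC 0 0 P B ψ (by simpa using by linarith) (by simpa using hP1) le_rfl hB
    (by simpa using hs) hsupp'
  rw [tendsto_nhds_unique ha (hζ _ ⟨hr, hψ.2⟩)] at h2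
  simp only [pow_zero, Real.one_rpow, mul_one] at h2
  have h1 : |glue F 1 ψ| ≤ ∑ k ∈ box (0 : Rd d) P 1, M * A (latticePt 1 k) * B := by
    rw [glue_eq hd F one_pos 0 P ψ hsupp']
    refine (Finset.abs_sum_le_sum_abs _ _).trans (Finset.sum_le_sum fun k _ => ?_)
    have := (hloc 1 B ψ (latticePt 1 k) one_pos hB hs).2 (F (latticePt 1 k)) _ (hA (latticePt 1 k))
    rw [one_pow, mul_one] at this
    linarith
  have h3 := abs_sub_abs_le_abs_sub (ζ ψ) (glue F 1 ψ)
  rw [abs_sub_comm] at h3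
  rw [add_mul, Finset.sum_mul]
  linarith

/-- A functional that is `O(l ^ γ)`, `γ > 0`, on test functions at scale `l` vanishes: cutting `ψ`
along the lattice bumps gives `O(l ^ (-d))` pieces, each contributing `O(l ^ (d + γ))`. -/
lemma eq_zero_of_small {d r : ℕ} (hd : 1 ≤ d) {γ : ℝ} (hγ : 0 < γ) (u : (Rd d → ℝ) →ₗ[ℝ] ℝ)
    (hu : ∀ P : ℝ, ∃ C : ℝ, ∀ x : Rd d, ‖x‖ ≤ P → ∀ φ ∈ Br d r, ∀ l : ℝ, 0 < l → l ≤ 1 →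
      |u (scal φ x l)| ≤ C * l ^ γ) (ψ : Rd d → ℝ) (hψ : ψ ∈ Crc d r) : u ψ = 0 := by
  obtain ⟨P, B, hP, hB, hs, hsupp⟩ := Crc_bounds hψ
  obtain ⟨M, hM, hloc⟩ := exists_localise d r hd
  obtain ⟨C, hC⟩ := hu (2 * d * P)
  have hbound : ∀ l : ℝ, 0 < l → l ≤ 1 →
      |u ψ| ≤ (2 * d + 3) ^ d * P ^ d * (M * B * |C|) * l ^ γ := by
    intro l hl hl1
    have hterm : ∀ k ∈ box (0 : Rd d) P l, |u (ψ * bump (latticePt l k) l)|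
        ≤ M * B * l ^ d * (|C| * l ^ γ) := by
      intro k hk
      have h1 := latticePt_near hd hl 0 P (by linarith) k hk
      rw [sub_zero] at h1
      refine (hloc l B ψ (latticePt l k) hl hB (hs.mono hB hl hl1)).2 u _ fun φ hφ =>
        (hC _ h1 φ hφ l hl hl1).trans ?_
      gcongr
      exact le_abs_self C
    nth_rewrite 1 [eq_sum_bump hd hl 0 P ψ hsupp]
    rw [map_sum]
    calc _ ≤ ∑ k ∈ box (0 : Rd d) P l, |u (ψ * bump (latticePt l k) l)| :=
          Finset.abs_sum_le_sum_abs _ _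
      _ ≤ (box (0 : Rd d) P l).card • (M * B * l ^ d * (|C| * l ^ γ)) :=
          Finset.sum_le_card_nsmul _ _ _ hterm
      _ ≤ ((2 * d + 3) ^ d * (P / l) ^ d) * (M * B * l ^ d * (|C| * l ^ γ)) := by
          rw [nsmul_eq_mul]
          gcongr
          exact box_card hl 0 P (by linarith)
      _ = _ := by
          rw [div_pow]
          field_simp
  have hlim : Tendsto (fun l : ℝ => (2 * d + 3) ^ d * P ^ d * (M * B * |C|) * l ^ γ)
      (nhdsWithin 0 (Ioi 0)) (nhds 0) := by
    have : Tendsto (fun l : ℝ => l ^ γ) (nhdsWithin 0 (Ioi 0)) (nhds 0) := by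
      have := (Real.continuousAt_rpow_const 0 γ (Or.inr hγ.le)).tendsto
      rw [Real.zero_rpow hγ.ne'] at this
      exact this.mono_left nhdsWithin_le_nhds
    simpa using this.const_mul ((2 * d + 3) ^ d * P ^ d * (M * B * |C|))
  have hle : |u ψ| ≤ 0 := by
    refine ge_of_tendsto hlim ?_
    filter_upwards [Ioc_mem_nhdsGT (show (0 : ℝ) < 1 by norm_num)] with l hl
    exact hbound l hl.1 hl.2
  exact abs_nonpos_iff.1 hle

/-! ### The germ of a modelled distribution -/

section Model

variable {d r : ℕ} {ι : Type} [Fintype ι] [DecidableEq ι]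
  {T : ι → Type} [∀ i, NormedAddCommGroup (T i)] [∀ i, NormedSpace ℝ (T i)]
  {deg : ι → ℝ} {γ : ℝ} {G : Set ((∀ i, T i) ≃ₗ[ℝ] (∀ i, T i))}
  {Pmap : Rd d → (∀ i, T i) →ₗ[ℝ] ((Rd d → ℝ) →ₗ[ℝ] ℝ)}
  {Γ : Rd d → Rd d → ((∀ i, T i) ≃ₗ[ℝ] (∀ i, T i))} {f : Rd d → ∀ i, T i}

lemma model_bound (hmodel : IsModel r deg G Pmap Γ) {K : Set (Rd d)} (hK : IsCompact K) :
    ∃ C : ℝ, 0 ≤ C ∧ ∀ x ∈ K, ∀ τ : ∀ i, T i, ∀ φ ∈ Br d r, ∀ l : ℝ, 0 < l → l ≤ 1 →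
      |Pmap x τ (scal φ x l)| ≤ ∑ i, C * l ^ (deg i) * ‖τ i‖ := by
  obtain ⟨C, hC, -⟩ := hmodel.2.2.2.2 K hK
  refine ⟨|C|, abs_nonneg _, fun x hx τ φ hφ l hl hl1 => ?_⟩
  have e : τ = ∑ i, Pi.single i (τ i) := (Finset.univ_sum_single τ).symm
  calc |Pmap x τ (scal φ x l)| = |∑ i, Pmap x (Pi.single i (τ i)) (scal φ x l)| := by
        conv_lhs => rw [e, map_sum, LinearMap.sum_apply]
    _ ≤ ∑ i, |Pmap x (Pi.single i (τ i)) (scal φ x l)| := Finset.abs_sum_le_sum_abs _ _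
    _ ≤ _ := by
        refine Finset.sum_le_sum fun i _ => (hC i (τ i) x hx φ hφ l hl hl1).trans ?_
        gcongr
        exact le_abs_self C

/-- The structure group preserves the subspace of elements with components of degree `< γ`. -/
lemma group_preserves (hG : IsStructureGroup deg G) {g : (∀ i, T i) ≃ₗ[ℝ] (∀ i, T i)} (hg : g ∈ G)
    (τ : ∀ i, T i) (hτ : ∀ i, γ ≤ deg i → τ i = 0) (j : ι) (hj : γ ≤ deg j) : g τ j = 0 := by
  have e : τ = ∑ i, Pi.single i (τ i) := (Finset.univ_sum_single τ).symm
  have hsum : g τ j = ∑ i, g (Pi.single i (τ i)) j := by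
    conv_lhs => rw [e, map_sum, Finset.sum_apply]
  rw [hsum]
  refine Finset.sum_eq_zero fun i _ => ?_
  by_cases hi : γ ≤ deg i
  · simp [hτ i hi]
  · have hij : j ≠ i := by
      rintro rfl
      exact hi hj
    have := hG.2.2.2 g hg i (τ i) j (by linarith)
    simpa [hij] using this

/-- The germ `x ↦ Π_x f(x)` attached to a modelled distribution of order `γ` is coherent of
order `γ`. -/
lemma coherent_of_InD (hG : IsStructureGroup deg G) (hmodel : IsModel r deg G Pmap Γ)
    (hf : InD deg γ Γ f) : Coherent r γ fun x => Pmap x (f x) := by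
  intro P c hc
  have hK : IsCompact (closedBall (0 : Rd d) P) := isCompact_closedBall _ _
  obtain ⟨C₁, hC₁0, hC₁⟩ := model_bound hmodel hK
  obtain ⟨C₂, hC₂⟩ := hf.2 _ hK
  refine ⟨∑ i, C₁ * (|C₂| * c ^ (γ - deg i)), by positivity, ?_⟩
  intro x y hx hy l hl hl1 hxy φ hφ
  have hx' : x ∈ closedBall (0 : Rd d) P := by simpa using hx
  have hy' : y ∈ closedBall (0 : Rd d) P := by simpa using hy
  have e : Pmap x (f x) (scal φ x l) - Pmap y (f y) (scal φ x l)
      = Pmap x (f x - Γ x y (f y)) (scal φ x l) := by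
    rw [map_sub, LinearMap.sub_apply, hmodel.2.2.2.1]
  simp only [e]
  refine (hC₁ x hx' _ φ hφ l hl hl1).trans ?_
  rw [Finset.sum_mul]
  refine Finset.sum_le_sum fun i _ => ?_
  by_cases hi : γ ≤ deg i
  · have h0 : (f x - Γ x y (f y)) i = 0 := by
      rw [Pi.sub_apply, hf.1 x i hi, group_preserves hG (hmodel.1 x y) (f y) (hf.1 y) i hi,
        sub_zero]
    rw [h0, norm_zero, mul_zero]
    positivity
  · push Not at hi
    have h1 : ‖(f x - Γ x y (f y)) i‖ ≤ |C₂| * (c ^ (γ - deg i) * l ^ (γ - deg i)) := by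
      refine (hC₂ i hi x hx' y hy').trans ?_
      rw [← Real.mul_rpow hc hl.le]
      have : 0 ≤ γ - deg i := by linarith
      gcongr
      exact le_abs_self C₂
    calc _ ≤ C₁ * l ^ deg i * (|C₂| * (c ^ (γ - deg i) * l ^ (γ - deg i))) := by gcongr
      _ = C₁ * (|C₂| * c ^ (γ - deg i)) * (l ^ deg i * l ^ (γ - deg i)) := by ring
      _ = _ := by rw [← Real.rpow_add hl, add_sub_cancel]

end Model

/-! ### Linearity in the germ -/

lemma glue_add {d r : ℕ} (hd : 1 ≤ d) (F F' : Rd d → (Rd d → ℝ) →ₗ[ℝ] ℝ) {l : ℝ} (hl : 0 < l)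
    {ψ : Rd d → ℝ} (hψ : ψ ∈ Crc d r) :
    glue (fun x => F x + F' x) l ψ = glue F l ψ + glue F' l ψ := by
  obtain ⟨P, B, hP, hB, hs, hsupp⟩ := Crc_bounds hψ
  simp only [glue_eq hd _ hl 0 P ψ hsupp, LinearMap.add_apply, Finset.sum_add_distrib]

lemma glue_smul {d r : ℕ} (hd : 1 ≤ d) (c : ℝ) (F : Rd d → (Rd d → ℝ) →ₗ[ℝ] ℝ) {l : ℝ}
    (hl : 0 < l) {ψ : Rd d → ℝ} (hψ : ψ ∈ Crc d r) :
    glue (fun x => c • F x) l ψ = c * glue F l ψ := by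
  obtain ⟨P, B, hP, hB, hs, hsupp⟩ := Crc_bounds hψ
  simp only [glue_eq hd _ hl 0 P ψ hsupp, LinearMap.smul_apply, Finset.mul_sum, smul_eq_mul]

/-- **Reconstruction theorem** (Theorem 2.10 / Theorem `theo:reconstruction`):
for every regularity structure, model on `ℝ^d` and `γ > 0`, there exists a unique linear
map `R : D^γ → D'(ℝ^d)` such that `R f` looks like `Π_x f(x)` near `x` to order `γ`,
locally uniformly in `x`.  Uniqueness means that any other map with this property
agrees with `R` on every smooth compactly supported test function. -/
theorem reconstruction_theorem
    (d r : ℕ) (hd : 1 ≤ d)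
    {ι : Type} [Fintype ι] [DecidableEq ι] [Nonempty ι] (deg : ι → ℝ)
    {T : ι → Type} [∀ i, NormedAddCommGroup (T i)] [∀ i, NormedSpace ℝ (T i)]
    [∀ i, FiniteDimensional ℝ (T i)]
    (G : Set ((∀ i, T i) ≃ₗ[ℝ] (∀ i, T i))) (hG : IsStructureGroup deg G)
    (hr : |⨅ i, deg i| < (r : ℝ))
    (Pmap : Rd d → (∀ i, T i) →ₗ[ℝ] ((Rd d → ℝ) →ₗ[ℝ] ℝ))
    (Γ : Rd d → Rd d → ((∀ i, T i) ≃ₗ[ℝ] (∀ i, T i)))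
    (hmodel : IsModel r deg G Pmap Γ)
    (γ : ℝ) (hγ : 0 < γ) :
    ∃ R : (Rd d → ∀ i, T i) → ((Rd d → ℝ) →ₗ[ℝ] ℝ),
      (∀ f g : Rd d → ∀ i, T i, InD deg γ Γ f → InD deg γ Γ g →
        R (f + g) = R f + R g) ∧
      (∀ (c : ℝ) (f : Rd d → ∀ i, T i), InD deg γ Γ f → R (c • f) = c • R f) ∧
      (∀ f : Rd d → ∀ i, T i, InD deg γ Γ f → Reconstructs r Pmap γ f (R f)) ∧
      (∀ R' : (Rd d → ∀ i, T i) → ((Rd d → ℝ) →ₗ[ℝ] ℝ),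
        (∀ f : Rd d → ∀ i, T i, InD deg γ Γ f → Reconstructs r Pmap γ f (R' f)) →
        ∀ f : Rd d → ∀ i, T i, InD deg γ Γ f →
          ∀ ψ : Rd d → ℝ, IsTestFunction ψ → R' f ψ = R f ψ) := by
  -- Values outside `C^r_c` are immaterial; a linear projection onto `C^r_c` makes the extension
  -- to all functions linear in the modelled distribution.
  obtain ⟨p, hp⟩ := LinearMap.exists_leftInverse_of_injective (Crc d r).subtype
    (Submodule.ker_subtype _)
  have hp' : ∀ ψ (hψ : ψ ∈ Crc d r), p ψ = ⟨ψ, hψ⟩ := fun ψ hψ =>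
    LinearMap.congr_fun hp (⟨ψ, hψ⟩ : Crc d r)
  have hex : ∀ f : Rd d → ∀ i, T i, ∃ L : Crc d r →ₗ[ℝ] ℝ,
      (∃ L' : Crc d r →ₗ[ℝ] ℝ, ∀ ψ : Crc d r, Tendsto (fun n : ℕ =>
        glue (fun x => Pmap x (f x)) ((1 / 2) ^ n) (ψ : Rd d → ℝ)) atTop (nhds (L' ψ))) →
      ∀ ψ : Crc d r, Tendsto (fun n : ℕ =>
        glue (fun x => Pmap x (f x)) ((1 / 2) ^ n) (ψ : Rd d → ℝ)) atTop (nhds (L ψ)) := by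
    intro f
    by_cases h : ∃ L' : Crc d r →ₗ[ℝ] ℝ, ∀ ψ : Crc d r, Tendsto (fun n : ℕ =>
        glue (fun x => Pmap x (f x)) ((1 / 2) ^ n) (ψ : Rd d → ℝ)) atTop (nhds (L' ψ))
    · exact ⟨h.choose, fun _ => h.choose_spec⟩
    · exact ⟨0, fun h' => absurd h' h⟩
  choose L hL using hex
  have hcoh : ∀ f, InD deg γ Γ f → Coherent r γ fun x => Pmap x (f x) :=
    fun f hf => coherent_of_InD hG hmodel hf
  have hLD := fun f hf => hL f (exists_limit_functional hd hγ (hcoh f hf))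
  have hadd : ∀ f g, InD deg γ Γ f → InD deg γ Γ g → L (f + g) = L f + L g := by
    intro f g hf hg
    have key : ∀ ψ : Crc d r, Tendsto (fun n : ℕ =>
        glue (fun x => Pmap x ((f + g) x)) ((1 / 2) ^ n) (ψ : Rd d → ℝ)) atTop
        (nhds ((L f + L g) ψ)) := by
      intro ψ
      refine ((hLD f hf ψ).add (hLD g hg ψ)).congr fun n => ?_
      rw [← glue_add hd _ _ (by positivity) ψ.2]
      simp only [Pi.add_apply, map_add]
    ext ψ
    exact tendsto_nhds_unique (hL _ ⟨_, key⟩ ψ) (key ψ)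
  have hsmul : ∀ (c : ℝ) f, InD deg γ Γ f → L (c • f) = c • L f := by
    intro c f hf
    have key : ∀ ψ : Crc d r, Tendsto (fun n : ℕ =>
        glue (fun x => Pmap x ((c • f) x)) ((1 / 2) ^ n) (ψ : Rd d → ℝ)) atTop
        (nhds ((c • L f) ψ)) := by
      intro ψ
      refine ((hLD f hf ψ).const_mul c).congr fun n => ?_
      rw [← glue_smul hd c _ (by positivity) ψ.2]
      simp only [Pi.smul_apply, map_smul]
    ext ψ
    exact tendsto_nhds_unique (hL _ ⟨_, key⟩ ψ) (key ψ)
  have hrec : ∀ f, InD deg γ Γ f → Reconstructs r Pmap γ f (L f ∘ₗ p) := by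
    intro f hf
    have hζ : ∀ ψ ∈ Crc d r, Tendsto (fun n : ℕ =>
        glue (fun x => Pmap x (f x)) ((1 / 2) ^ n) ψ) atTop (nhds ((L f ∘ₗ p) ψ)) := by
      intro ψ hψ
      rw [LinearMap.comp_apply, hp' ψ hψ]
      exact hLD f hf ⟨ψ, hψ⟩
    constructor
    · refine limit_isDistribution hd hγ (hcoh f hf) (fun x => ?_) _ hζ
      obtain ⟨C, _, hC⟩ := model_bound hmodel (isCompact_singleton (x := x))
      exact ⟨_, fun φ hφ => hC x rfl (f x) φ hφ 1 one_pos le_rfl⟩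
    · intro K hK
      obtain ⟨P, hP⟩ := hK.isBounded.subset_closedBall (0 : Rd d)
      obtain ⟨C, hC⟩ := limit_near hd hγ (hcoh f hf) _ hζ (max P 1) (le_max_right _ _)
      refine ⟨C, fun x hx => hC x ?_⟩
      exact (mem_closedBall_zero_iff.1 (hP hx)).trans (le_max_left _ _)
  refine ⟨fun f => L f ∘ₗ p, ?_, ?_, hrec, ?_⟩
  · intro f g hf hg
    simp only [hadd f g hf hg, LinearMap.add_comp]
  · intro c f hf
    simp only [hsmul c f hf, LinearMap.smul_comp]
  · intro R' hR' f hf ψ hψ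
    have hψr : ψ ∈ Crc d r := ⟨hψ.1.of_le (by exact_mod_cast le_top), hψ.2⟩
    refine sub_eq_zero.1 (eq_zero_of_small (r := r) hd hγ (R' f - L f ∘ₗ p) (fun P => ?_) ψ hψr)
    have hK : IsCompact (closedBall (0 : Rd d) P) := isCompact_closedBall _ _
    obtain ⟨C₁, hC₁⟩ := (hR' f hf).2 _ hK
    obtain ⟨C₂, hC₂⟩ := (hrec f hf).2 _ hK
    refine ⟨C₁ + C₂, fun x hx φ hφ l hl hl1 => ?_⟩
    have hx' : x ∈ closedBall (0 : Rd d) P := by simpa using hx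
    have h1 := hC₁ x hx' φ hφ l hl hl1
    have h2 := hC₂ x hx' φ hφ l hl hl1
    have h3 := abs_sub_le (R' f (scal φ x l)) (Pmap x (f x) (scal φ x l))
      ((L f ∘ₗ p) (scal φ x l))
    rw [abs_sub_comm] at h2
    rw [LinearMap.sub_apply, add_mul]
    linarith
end
end

section
/- Let d ≥ 1, let r ≥ 1 be an integer, and let γ > 0. If ζ is a distribution on ℝ^d such that for every compact set K ⊂ ℝ^d there exists a constant C with |ζ(φ_x^λ)| ≤ C λ^γ for all φ ∈ B_r, all x ∈ K and all λ ∈ (0,1], then ζ = 0. (This is the uniqueness content of the reconstruction theorem: a distribution that vanishes to strictly positive order γ around every point is identically zero.) -/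
/-!
The idea is to cut a test function `ψ` into pieces living at scale `l = 1/m` by a smooth partition
of unity whose bumps are the translates of one rescaled profile along a lattice of spacing
`1/(d m)`. Each piece is `l ^ d * A` times some `scal φ x l` with `φ ∈ Br d r`, where `A` depends
only on `ψ` (`exists_normalizing_constant`, by the Leibniz rule), so `ζ` of a piece is at most
`A * C * l ^ (d + γ)`. Only `O(l ^ (-d))` pieces meet the support of `ψ`, hence
`|ζ ψ| = O(l ^ γ)`, and letting `m → ∞` gives `ζ ψ = 0`.

The partition of unity is explicit: the one-dimensional profile is a difference of two unit
translates of `Real.smoothTransition`, so that sums of its integer translates telescope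
(`sum_bump1`), and the profile on `ℝ^d` is a product over the coordinates.
-/


open MeasureTheory Metric Set Filter

noncomputable section

/-- One-dimensional profile, supported in `[-1, 1]`, whose integer translates sum to `1`. -/
def bump1 (t : ℝ) : ℝ := Real.smoothTransition (t + 1) - Real.smoothTransition t

/-- Profile on `ℝ^d`: the product of `bump1` over the coordinates. The argument is dilated by `d`
so that the support, a cube of half-side `1/d`, lies in the Euclidean unit ball. -/
def bumpd (d : ℕ) (z : Rd d) : ℝ := ∏ i, bump1 (d * z i)

lemma contDiff_bump1 (n : ℕ∞) : ContDiff ℝ n bump1 :=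
  (Real.smoothTransition.contDiff.comp (contDiff_id.add contDiff_const)).sub
    Real.smoothTransition.contDiff

lemma bump1_eq_zero {t : ℝ} (h : 1 < |t|) : bump1 t = 0 := by
  unfold bump1
  rcases lt_abs.1 h with h | h
  · rw [Real.smoothTransition.one_of_one_le (by linarith),
      Real.smoothTransition.one_of_one_le (by linarith), sub_self]
  · rw [Real.smoothTransition.zero_of_nonpos (by linarith),
      Real.smoothTransition.zero_of_nonpos (by linarith), sub_self]

lemma sum_bump1 (L : ℕ) {t : ℝ} (h : |t| ≤ L) :
    ∑ j ∈ Finset.range (2 * L + 1), bump1 (t - ((j : ℝ) - L)) = 1 := by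
  obtain ⟨h1, h2⟩ := abs_le.1 h
  have key := Finset.sum_range_sub' (fun j : ℕ => Real.smoothTransition (t + L - j + 1))
    (2 * L + 1)
  rw [Real.smoothTransition.one_of_one_le (by push_cast; linarith),
    Real.smoothTransition.zero_of_nonpos (by push_cast; linarith), sub_zero] at key
  rw [← key]
  refine Finset.sum_congr rfl fun j _ => ?_
  unfold bump1
  congr 2 <;> push_cast <;> ring

lemma contDiff_bumpd (d : ℕ) (n : ℕ∞) : ContDiff ℝ n (bumpd d) := by
  unfold bumpd
  refine contDiff_prod fun i _ => (contDiff_bump1 n).comp ?_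
  fun_prop

lemma norm_le_of_coord_le {d : ℕ} (z : Rd d) (c : ℝ) (h : ∀ i, |z i| ≤ c) : ‖z‖ ≤ d * c := by
  have hz : z = ∑ i, z i • EuclideanSpace.single i (1 : ℝ) := by
    ext j
    simp [Pi.single_apply]
  calc ‖z‖ = ‖∑ i, z i • EuclideanSpace.single i (1 : ℝ)‖ := by rw [← hz]
    _ ≤ ∑ i, ‖z i • EuclideanSpace.single i (1 : ℝ)‖ := norm_sum_le _ _
    _ ≤ ∑ _i : Fin d, c := by
        refine Finset.sum_le_sum fun i _ => ?_
        simpa [norm_smul] using h i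
    _ = d * c := by simp

lemma tsupport_bumpd {d : ℕ} (hd : 1 ≤ d) : tsupport (bumpd d) ⊆ closedBall 0 1 := by
  have hd0 : (0 : ℝ) < d := by exact_mod_cast hd
  refine closure_minimal (fun z hz => ?_) isClosed_closedBall
  rw [mem_closedBall_zero_iff]
  have : ∀ i, |z i| ≤ 1 / d := by
    intro i
    by_contra! hlt
    refine hz (Finset.prod_eq_zero (Finset.mem_univ i) (bump1_eq_zero ?_))
    rwa [abs_mul, abs_of_pos hd0, ← div_lt_iff₀' hd0]
  have h := norm_le_of_coord_le z _ this
  rwa [mul_one_div_cancel hd0.ne'] at h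

/-- One constant bounds all derivatives up to a given order. -/
lemma exists_iteratedFDeriv_bound {d : ℕ} (r : ℕ) {f : Rd d → ℝ} (hf : ContDiff ℝ (⊤ : ℕ∞) f)
    (hc : HasCompactSupport f) :
    ∃ M : ℝ, 0 ≤ M ∧ ∀ i ≤ r, ∀ y, ‖iteratedFDeriv ℝ i f y‖ ≤ M := by
  have h : ∀ i : ℕ, ∃ M : ℝ, ∀ y, ‖iteratedFDeriv ℝ i f y‖ ≤ M := fun i =>
    (hc.iteratedFDeriv i).exists_bound_of_continuous
      (hf.continuous_iteratedFDeriv (by exact_mod_cast le_top))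
  choose M hM using h
  have h0 : ∀ i, 0 ≤ M i := fun i => (norm_nonneg _).trans (hM i 0)
  refine ⟨∑ i ∈ Finset.range (r + 1), M i, Finset.sum_nonneg fun i _ => h0 i, fun i hi y => ?_⟩
  exact (hM i y).trans
    (Finset.single_le_sum (f := M) (fun i _ => h0 i) (Finset.mem_range.2 (by omega)))

/-- Zooming into `ψ` around any point at any scale `l ≤ 1` and localizing by the profile gives
elements of `Br d r`, up to a normalization uniform in the point and the scale. -/
lemma exists_normalizing_constant {d : ℕ} (r : ℕ) (hd : 1 ≤ d) {ψ : Rd d → ℝ}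
    (hψ : IsTestFunction ψ) :
    ∃ A : ℝ, 0 < A ∧ ∀ (x : Rd d) (l : ℝ), 0 < l → l ≤ 1 →
      A⁻¹ • (fun z => ψ (x + l • z) * bumpd d z) ∈ Br d r := by
  obtain ⟨M, hM0, hM⟩ := exists_iteratedFDeriv_bound r hψ.1 hψ.2
  have hbc : HasCompactSupport (bumpd d) :=
    (isCompact_closedBall (0 : Rd d) 1).of_isClosed_subset (isClosed_tsupport _)
      (tsupport_bumpd hd)
  obtain ⟨N, hN0, hN⟩ := exists_iteratedFDeriv_bound r (contDiff_bumpd d ⊤) hbc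
  set A : ℝ := 1 + 2 ^ r * (M * N) with hA
  have hA0 : 0 < A := by positivity
  refine ⟨A, hA0, fun x l hl hl1 => ?_⟩
  have hψx : ContDiff ℝ (⊤ : ℕ∞) (fun z => ψ (x + z)) :=
    hψ.1.comp (contDiff_const.add contDiff_id)
  have hψl : ContDiff ℝ (⊤ : ℕ∞) (fun z => ψ (x + l • z)) :=
    hψ.1.comp (contDiff_const.add (contDiff_id.const_smul l))
  have hprod : ContDiff ℝ (⊤ : ℕ∞) (fun z => ψ (x + l • z) * bumpd d z) :=
    hψl.mul (contDiff_bumpd d ⊤)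
  have hder : ∀ i ≤ r, ∀ z, ‖iteratedFDeriv ℝ i (fun z => ψ (x + l • z)) z‖ ≤ M := by
    intro i hi z
    have h1 := iteratedFDeriv_comp_const_smul (i := i) l
      (hψx.of_le (by exact_mod_cast le_top))
    rw [congrFun h1 z, iteratedFDeriv_comp_add_left, norm_smul, norm_pow, Real.norm_eq_abs,
      abs_of_pos hl]
    calc l ^ i * _ ≤ 1 * M := mul_le_mul (pow_le_one₀ hl.le hl1) (hM i hi _)
          (norm_nonneg _) zero_le_one
      _ = M := one_mul M
  refine ⟨(hprod.const_smul A⁻¹).of_le (by exact_mod_cast le_top), ?_, fun n hn z => ?_⟩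
  · exact (tsupport_smul_subset_right (fun _ => A⁻¹) _).trans
      ((tsupport_mul_subset_right).trans (tsupport_bumpd hd))
  · rw [iteratedFDeriv_const_smul_apply (hprod.of_le (by exact_mod_cast le_top)).contDiffAt,
      norm_smul, norm_inv, Real.norm_eq_abs, abs_of_pos hA0, inv_mul_le_iff₀ hA0, mul_one]
    calc ‖iteratedFDeriv ℝ n (fun z => ψ (x + l • z) * bumpd d z) z‖
        ≤ ∑ i ∈ Finset.range (n + 1), (n.choose i : ℝ) *
          ‖iteratedFDeriv ℝ i (fun z => ψ (x + l • z)) z‖ *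
          ‖iteratedFDeriv ℝ (n - i) (bumpd d) z‖ :=
          norm_iteratedFDeriv_mul_le hψl (contDiff_bumpd d ⊤) z (by exact_mod_cast le_top)
      _ ≤ ∑ i ∈ Finset.range (n + 1), (n.choose i : ℝ) * M * N := by
          refine Finset.sum_le_sum fun i hi => ?_
          have hi' : i ≤ n := Nat.lt_succ_iff.1 (Finset.mem_range.1 hi)
          have h1 := hder i (hi'.trans hn) z
          have h2 := hN (n - i) ((Nat.sub_le n i).trans hn) z
          gcongr
      _ = 2 ^ n * (M * N) := by
          rw [← Finset.sum_mul, ← Finset.sum_mul, ← Nat.cast_sum, Nat.sum_range_choose]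
          push_cast
          ring
      _ ≤ 2 ^ r * (M * N) := by
          gcongr
          norm_num
      _ ≤ A := by linarith

/-- Node of the lattice of spacing `1/(d m)`, with multi-index `p` recentred by `L`. -/
def node (d m L : ℕ) (p : Fin d → ℕ) : Rd d :=
  WithLp.toLp 2 fun i => ((p i : ℝ) - L) / (d * m)

lemma sum_bumpd_node {d m L : ℕ} (hd : 1 ≤ d) (hm : 1 ≤ m) (y : Rd d)
    (hy : ∀ i, |d * m * y i| ≤ L) :
    ∑ p ∈ Fintype.piFinset fun _ : Fin d => Finset.range (2 * L + 1),
      bumpd d ((m : ℝ) • (y - node d m L p)) = 1 := by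
  have hd0 : (d : ℝ) ≠ 0 := by positivity
  have hm0 : (m : ℝ) ≠ 0 := by positivity
  have h := Finset.prod_univ_sum (fun _ : Fin d => Finset.range (2 * L + 1))
    (fun (i : Fin d) (j : ℕ) => bump1 (d * m * y i - ((j : ℝ) - L)))
  rw [Finset.prod_congr rfl fun i _ => sum_bump1 L (hy i), Finset.prod_const_one] at h
  rw [h]
  refine Finset.sum_congr rfl fun p _ => Finset.prod_congr rfl fun i _ => ?_
  congr 1
  simp only [node, PiLp.smul_apply, PiLp.sub_apply, smul_eq_mul]
  field_simp

/-- A distribution on `ℝ^d` that vanishes to strictly positive order `γ` around every point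
is identically zero: this is the uniqueness content of the reconstruction theorem. -/
theorem distribution_vanishing_to_positive_order_is_zero
    (d r : ℕ) (hd : 1 ≤ d) (hr : 1 ≤ r) (γ : ℝ) (hγ : 0 < γ)
    (ζ : (Rd d → ℝ) →ₗ[ℝ] ℝ) (hζ : IsDistribution ζ)
    (hbound : ∀ K : Set (Rd d), IsCompact K → ∃ C : ℝ, ∀ φ ∈ Br d r, ∀ x ∈ K,
      ∀ l : ℝ, 0 < l → l ≤ 1 → |ζ (scal φ x l)| ≤ C * l ^ γ) :
    ∀ ψ : Rd d → ℝ, IsTestFunction ψ → ζ ψ = 0 := by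
  intro ψ hψ
  have hd0 : (0 : ℝ) < d := by exact_mod_cast hd
  obtain ⟨A, hA0, hA⟩ := exists_normalizing_constant r hd hψ
  obtain ⟨R, hR⟩ : ∃ R : ℕ, ∀ y, ψ y ≠ 0 → ‖y‖ ≤ R := by
    obtain ⟨R, hR⟩ := hψ.2.isCompact.isBounded.exists_norm_le
    obtain ⟨n, hn⟩ := exists_nat_ge R
    exact ⟨n, fun y hy => (hR y (subset_tsupport ψ hy)).trans hn⟩
  obtain ⟨C, hC⟩ := hbound _ (isCompact_closedBall (0 : Rd d) (d * R))
  have main : ∀ m : ℕ, 1 ≤ m →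
      |ζ ψ| ≤ (2 * d * R + 1) ^ d * A * |C| * ((m : ℝ)⁻¹) ^ γ := by
    intro m hm
    have hm1 : (1 : ℝ) ≤ m := by exact_mod_cast hm
    have hm0 : (0 : ℝ) < m := by linarith
    set l : ℝ := (m : ℝ)⁻¹ with hl
    have hl0 : 0 < l := inv_pos.2 hm0
    have hl1 : l ≤ 1 := inv_le_one_of_one_le₀ hm1
    -- with this many nodes in each direction the lattice covers the cube `[-R, R]^d`
    set L : ℕ := d * m * R with hL
    set P := Fintype.piFinset fun _ : Fin d => Finset.range (2 * L + 1) with hP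
    set φ : (Fin d → ℕ) → Rd d → ℝ := fun p =>
      A⁻¹ • (fun z => ψ (node d m L p + l • z) * bumpd d z) with hφ
    have hdec : ψ = ∑ p ∈ P, (l ^ d * A) • scal (φ p) (node d m L p) l := by
      funext y
      have hterm : ∀ p, ((l ^ d * A) • scal (φ p) (node d m L p) l) y =
          ψ y * bumpd d ((m : ℝ) • (y - node d m L p)) := by
        intro p
        have hy : node d m L p + l • l⁻¹ • (y - node d m L p) = y := by
          rw [smul_inv_smul₀ hl0.ne']
          abel
        simp only [hφ, scal, Pi.smul_apply, smul_eq_mul, hy]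
        rw [hl, inv_inv]
        field_simp
      rw [Finset.sum_apply, Finset.sum_congr rfl fun p _ => hterm p, ← Finset.mul_sum]
      by_cases hy : ψ y = 0
      · rw [hy, zero_mul]
      · rw [sum_bumpd_node hd hm y, mul_one]
        intro i
        have h1 : |y i| ≤ R := (PiLp.norm_apply_le y i).trans (hR y hy)
        rw [abs_mul, abs_of_pos (by positivity : (0 : ℝ) < d * m), hL]
        push_cast
        gcongr
    have hnode : ∀ p ∈ P, node d m L p ∈ closedBall (0 : Rd d) (d * R) := by
      intro p hp
      rw [mem_closedBall_zero_iff]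
      refine norm_le_of_coord_le _ _ fun i => ?_
      have h1 : p i ≤ 2 * L :=
        Nat.lt_succ_iff.1 (Finset.mem_range.1 (Fintype.mem_piFinset.1 hp i))
      have h2 : (p i : ℝ) ≤ 2 * L := by exact_mod_cast h1
      have h3 : (0 : ℝ) ≤ p i := Nat.cast_nonneg _
      have h4 : (L : ℝ) = R * (d * m) := by
        rw [hL]
        push_cast
        ring
      change |((p i : ℝ) - L) / (d * m)| ≤ R
      rw [abs_div, abs_of_pos (by positivity : (0 : ℝ) < d * m),
        div_le_iff₀ (by positivity), ← h4, abs_le]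
      constructor <;> linarith
    have hpiece : ∀ p ∈ P, |ζ ((l ^ d * A) • scal (φ p) (node d m L p) l)| ≤
        l ^ d * A * (|C| * l ^ γ) := by
      intro p hp
      rw [map_smul, smul_eq_mul, abs_mul, abs_of_pos (by positivity : 0 < l ^ d * A)]
      gcongr
      refine (hC _ (hA _ l hl0 hl1) _ (hnode p hp) l hl0 hl1).trans ?_
      gcongr
      exact le_abs_self C
    have hcard : (P.card : ℝ) = (2 * L + 1) ^ d := by
      rw [hP, Fintype.card_piFinset]
      simp
    calc |ζ ψ| = |∑ p ∈ P, ζ ((l ^ d * A) • scal (φ p) (node d m L p) l)| := by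
          rw [← map_sum, ← hdec]
      _ ≤ ∑ p ∈ P, |ζ ((l ^ d * A) • scal (φ p) (node d m L p) l)| :=
          Finset.abs_sum_le_sum_abs _ _
      _ ≤ ∑ _p ∈ P, l ^ d * A * (|C| * l ^ γ) := Finset.sum_le_sum hpiece
      _ = ((2 * L + 1) * l) ^ d * A * |C| * l ^ γ := by
          rw [Finset.sum_const, nsmul_eq_mul, hcard, mul_pow]
          ring
      _ ≤ (2 * d * R + 1) ^ d * A * |C| * l ^ γ := by
          have h : (2 * (L : ℝ) + 1) * l ≤ 2 * d * R + 1 := by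
            have : (2 * (L : ℝ) + 1) * l = 2 * d * R + l := by
              rw [hL, hl]
              push_cast
              field_simp
            linarith
          gcongr
  have hlim : Tendsto (fun m : ℕ => (2 * (d : ℝ) * R + 1) ^ d * A * |C| * ((m : ℝ)⁻¹) ^ γ)
      atTop (nhds 0) := by
    have h1 := (tendsto_inv_atTop_nhds_zero_nat (𝕜 := ℝ)).rpow_const (p := γ) (Or.inr hγ.le)
    rw [Real.zero_rpow hγ.ne'] at h1
    simpa using h1.const_mul ((2 * (d : ℝ) * R + 1) ^ d * A * |C|)
  have h0 : |ζ ψ| ≤ 0 :=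
    ge_of_tendsto hlim ((eventually_ge_atTop 1).mono main)
  exact abs_nonpos_iff.1 h0
end
end

section
/- Let k ∈ ℕ, γ ∈ (k, k+1), and f : ℝ^d → ℝ. The following are equivalent. (i) f is k times continuously differentiable and for every compact set K ⊂ ℝ^d there is a constant C with |D^ℓ f(y) − D^ℓ f(x)| ≤ C |y−x|^{γ−k} for all x,y ∈ K and all multiindices ℓ with |ℓ| = k (i.e. f is locally of class C^γ). (ii) There exists a family of continuous functions (F_ℓ)_{|ℓ| ≤ k} with F_0 = f such that for every compact set K ⊂ ℝ^d there is a constant C with |F_ℓ(y) − Σ_{m : |ℓ|+|m| ≤ k} F_{ℓ+m}(x) (y−x)^m / m!| ≤ C |y−x|^{γ−|ℓ|} for all x,y ∈ K and all multiindices ℓ with |ℓ| ≤ k. Moreover, in that case necessarily F_ℓ = D^ℓ f for every |ℓ| ≤ k. (In the language of regularity structures: for the canonical polynomial model, the space D^γ coincides with the local Hölder space C^γ when γ ∉ ℕ.) -/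
/-!
Write `T_ℓ(x, y) = ∑_m F_{ℓ+m}(x) (y - x)^m / m!` for the Taylor polynomial of a jet `F`
(`taylor`). Everything rests on the identity `∂_{y_j} T_ℓ(x, y) = T_{ℓ+e_j}(x, y)`
(`hasFDerivAt_taylor`).

Given the expansion bounds and `|ℓ| < k`, the function `F_ℓ - T_ℓ(x, ·)` is `O(|y - x|^{γ-|ℓ|})`
with `γ - |ℓ| > 1`, so it has zero derivative at `x`; hence `∂_j F_ℓ = F_{ℓ+e_j}`
(`JetBound.hasFDerivAt`). As the `F_ℓ` are continuous, `f = F_0` is `C^k` and `F_ℓ = D^ℓ f`.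
For `|ℓ| = k` one has `T_ℓ(x, y) = F_ℓ(x)`, so the bound is the Hölder estimate.

Conversely, take `F_ℓ = D^ℓ f`. The remainder `R_ℓ(x, y) = F_ℓ(y) - T_ℓ(x, y)` vanishes at `y = x`
and satisfies `∂_{y_j} R_ℓ = R_{ℓ+e_j}`, so downward induction on `|ℓ|` with the mean value
inequality on segments turns the Hölder estimate at `|ℓ| = k` into all the expansion bounds
(`taylor_remainder_le`). Identifying `∂_j D^ℓ f` with `D^{ℓ+e_j} f` uses the symmetry of second
derivatives, since `Dk` fixes an order of the partial derivatives (`Dk_add_unitIdx`).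
-/

open MeasureTheory Metric Set Filter

noncomputable section

/-- Total weight `|k|` of a multiindex. -/
def wt {d : ℕ} (k : Fin d → ℕ) : ℕ := ∑ j, k j

/-- Factorial `k!` of a multiindex. -/
def mfac {d : ℕ} (k : Fin d → ℕ) : ℕ := ∏ j, (k j).factorial

/-- The monomial `x^k = ∏_j x_j^{k_j}`. -/
def mono {d : ℕ} (k : Fin d → ℕ) (x : Rd d) : ℝ := ∏ j, (x j) ^ (k j)

/-- Partial derivative in the `j`-th coordinate direction. -/
def pderiv1 {d : ℕ} (j : Fin d) (f : Rd d → ℝ) : Rd d → ℝ :=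
  fun x => fderiv ℝ f x (EuclideanSpace.single j (1 : ℝ))

/-- Iterated partial derivative in the `j`-th coordinate direction. -/
def pderivPow {d : ℕ} (j : Fin d) : ℕ → (Rd d → ℝ) → Rd d → ℝ
  | 0 => fun f => f
  | n + 1 => fun f => pderiv1 j (pderivPow j n f)

/-- The multiindex partial derivative `D^k f`. -/
def Dk {d : ℕ} (k : Fin d → ℕ) (f : Rd d → ℝ) : Rd d → ℝ :=
  ((List.ofFn fun j : Fin d => pderivPow j (k j)).foldr (· ∘ ·) id) f

/-! ### Multiindices -/

/-- The multiindices `m` with `|ℓ| + |m| ≤ k`, in the form used by the theorem. -/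
abbrev jetIdx {d : ℕ} (k : ℕ) (ℓ : Fin d → ℕ) : Finset (Fin d → ℕ) :=
  (Finset.Iic fun _ : Fin d => k).filter (fun m => wt ℓ + wt m ≤ k)

/-- The unit multiindex `e_j`. -/
abbrev unitIdx {d : ℕ} (j : Fin d) : Fin d → ℕ := Pi.single j 1

lemma wt_add {d : ℕ} (a b : Fin d → ℕ) : wt (a + b) = wt a + wt b := by
  simp [wt, Finset.sum_add_distrib]

lemma wt_unitIdx {d : ℕ} (j : Fin d) : wt (unitIdx j) = 1 := by
  simp [wt]

lemma wt_zero {d : ℕ} : wt (0 : Fin d → ℕ) = 0 := by simp [wt]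

lemma wt_eq_zero {d : ℕ} {m : Fin d → ℕ} (h : wt m = 0) : m = 0 := by
  funext j
  simpa using (Finset.sum_eq_zero_iff.mp h) j (Finset.mem_univ j)

lemma mem_jetIdx {d k : ℕ} {ℓ m : Fin d → ℕ} : m ∈ jetIdx k ℓ ↔ wt ℓ + wt m ≤ k := by
  simp only [Finset.mem_filter, Finset.mem_Iic, and_iff_right_iff_imp]
  intro h j
  have : m j ≤ wt m := Finset.single_le_sum (fun _ _ => Nat.zero_le _) (Finset.mem_univ j)
  show m j ≤ k
  omega

lemma exists_eq_add_unitIdx {d n : ℕ} {ℓ : Fin d → ℕ} (h : wt ℓ = n + 1) :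
    ∃ (ℓ' : Fin d → ℕ) (j : Fin d), wt ℓ' = n ∧ ℓ = ℓ' + unitIdx j := by
  obtain ⟨j, hj⟩ : ∃ j, ℓ j ≠ 0 := by
    by_contra! hc
    have : ℓ = 0 := funext hc
    rw [this, wt_zero] at h
    omega
  have e : ℓ = (ℓ - unitIdx j) + unitIdx j := by
    funext i
    by_cases hi : i = j
    · subst hi
      simp
      omega
    · simp [hi]
  refine ⟨ℓ - unitIdx j, j, ?_, e⟩
  have := congrArg wt e
  rw [wt_add, wt_unitIdx] at this
  omega

/-! ### Taylor polynomials -/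

/-- The linear functional `v ↦ ∑ j, c j * v j`. -/
def lin {d : ℕ} (c : Fin d → ℝ) : Rd d →L[ℝ] ℝ :=
  ∑ j, c j • (EuclideanSpace.proj j : Rd d →L[ℝ] ℝ)

lemma lin_apply {d : ℕ} (c : Fin d → ℝ) (v : Rd d) : lin c v = ∑ j, c j * v j := by
  simp [lin]

lemma lin_single {d : ℕ} (c : Fin d → ℝ) (j : Fin d) :
    lin c (EuclideanSpace.single j (1 : ℝ)) = c j := by
  simp [lin_apply]

lemma norm_lin_le {d : ℕ} (c : Fin d → ℝ) : ‖lin c‖ ≤ ∑ j, |c j| := by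
  refine ContinuousLinearMap.opNorm_le_bound _ (Finset.sum_nonneg fun _ _ => abs_nonneg _) ?_
  intro v
  rw [lin_apply, Finset.sum_mul]
  refine (Finset.abs_sum_le_sum_abs _ _).trans (Finset.sum_le_sum fun j _ => ?_)
  rw [abs_mul]
  exact mul_le_mul_of_nonneg_left (PiLp.norm_apply_le v j) (abs_nonneg _)

/-- The Taylor polynomial at `x`, of total order `k`, of the component `F ℓ` of a jet `F`. -/
def taylor {d : ℕ} (k : ℕ) (F : (Fin d → ℕ) → Rd d → ℝ) (ℓ : Fin d → ℕ) (x y : Rd d) : ℝ :=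
  ∑ m ∈ jetIdx k ℓ, (mono m (y - x) / (mfac m : ℝ)) * F (ℓ + m) x

lemma mono_div_mfac {d : ℕ} (m : Fin d → ℕ) (z : Rd d) :
    mono m z / (mfac m : ℝ) = ∏ j, (z j) ^ (m j) / ((m j).factorial : ℝ) := by
  simp [mono, mfac, Finset.prod_div_distrib]

lemma mono_zero_right {d : ℕ} {m : Fin d → ℕ} (hm : m ≠ 0) : mono m (0 : Rd d) = 0 := by
  obtain ⟨j, hj⟩ := Function.ne_iff.mp hm
  exact Finset.prod_eq_zero (Finset.mem_univ j) (by simpa using hj)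

lemma taylor_self {d k : ℕ} (F : (Fin d → ℕ) → Rd d → ℝ) {ℓ : Fin d → ℕ} (h : wt ℓ ≤ k)
    (x : Rd d) : taylor k F ℓ x x = F ℓ x := by
  unfold taylor
  rw [Finset.sum_eq_single 0]
  · simp [mono, mfac]
  · intro m _ hm
    simp [mono_zero_right hm]
  · intro hc
    exact absurd (mem_jetIdx.mpr (by simpa [wt_zero] using h)) hc

/-- At top order the Taylor polynomial is constant. -/
lemma taylor_top {d k : ℕ} (F : (Fin d → ℕ) → Rd d → ℝ) {ℓ : Fin d → ℕ} (h : wt ℓ = k)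
    (x y : Rd d) : taylor k F ℓ x y = F ℓ x := by
  unfold taylor
  rw [Finset.sum_eq_single 0]
  · simp [mono, mfac]
  · intro m hm hm0
    have := mem_jetIdx.mp hm
    exact absurd (wt_eq_zero (by omega)) hm0
  · intro hc
    exact absurd (mem_jetIdx.mpr (by simp [wt_zero, h])) hc

/-- `∂_j (z^m / m!) = z^(m - e_j) / (m - e_j)!`, and `0` when `m_j = 0`. -/
lemma hasFDerivAt_mono {d : ℕ} (m : Fin d → ℕ) (z : Rd d) :
    HasFDerivAt (fun z : Rd d => mono m z / (mfac m : ℝ))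
      (lin fun j => if m j = 0 then 0 else
        mono (m - unitIdx j) z / (mfac (m - unitIdx j) : ℝ)) z := by
  have h1 : ∀ j ∈ (Finset.univ : Finset (Fin d)),
      HasFDerivAt (fun z : Rd d => (z j) ^ (m j) / ((m j).factorial : ℝ))
        ((((m j : ℝ) * (z j) ^ (m j - 1)) / ((m j).factorial : ℝ)) •
          (EuclideanSpace.proj j : Rd d →L[ℝ] ℝ)) z := by
    intro j _
    have hp : HasFDerivAt (fun z : Rd d => z j) (EuclideanSpace.proj j : Rd d →L[ℝ] ℝ) z :=
      (EuclideanSpace.proj j : Rd d →L[ℝ] ℝ).hasFDerivAt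
    exact ((hasDerivAt_pow (m j) (z j)).div_const _).comp_hasFDerivAt z hp
  have h2 := HasFDerivAt.finsetProd h1
  simp only [mono_div_mfac]
  refine h2.congr_fderiv ?_
  unfold lin
  refine Finset.sum_congr rfl fun j _ => ?_
  rw [smul_smul]
  congr 1
  beta_reduce
  split_ifs with h0
  · simp [h0]
  · rw [← Finset.prod_erase_mul _ _ (Finset.mem_univ j)]
    congr 1
    · refine Finset.prod_congr rfl fun i hi => ?_
      have : i ≠ j := Finset.ne_of_mem_erase hi
      simp [this]
    · obtain ⟨n, hn⟩ := Nat.exists_eq_succ_of_ne_zero h0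
      have hn0 : ((n : ℝ) + 1) ≠ 0 := by positivity
      have hf0 : (n.factorial : ℝ) ≠ 0 := by positivity
      simp only [hn, Pi.sub_apply, Pi.single_eq_same, Nat.succ_eq_add_one, Nat.add_sub_cancel,
        Nat.factorial_succ, Nat.cast_mul, Nat.cast_add, Nat.cast_one]
      field_simp

/-- The `j`-th partial derivative of the Taylor polynomial of `F ℓ` is the Taylor polynomial of
`F (ℓ + e_j)`. -/
lemma hasFDerivAt_taylor {d k : ℕ} (F : (Fin d → ℕ) → Rd d → ℝ) (ℓ : Fin d → ℕ) (x y : Rd d) :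
    HasFDerivAt (taylor k F ℓ x) (lin fun j => taylor k F (ℓ + unitIdx j) x y) y := by
  have h1 : ∀ m ∈ jetIdx k ℓ, HasFDerivAt
      (fun y : Rd d => (mono m (y - x) / (mfac m : ℝ)) * F (ℓ + m) x)
      (F (ℓ + m) x • lin fun j => if m j = 0 then 0 else
        mono (m - unitIdx j) (y - x) / (mfac (m - unitIdx j) : ℝ)) y := by
    intro m _
    have hs : HasFDerivAt (fun y : Rd d => y - x) (ContinuousLinearMap.id ℝ (Rd d)) y :=
      (hasFDerivAt_id y).sub_const x
    have := (hasFDerivAt_mono m (y - x)).comp y hs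
    exact HasFDerivAt.mul_const this _
  refine (HasFDerivAt.fun_sum h1).congr_fderiv ?_
  ext v
  simp only [sum_apply, smul_apply, lin_apply,
    smul_eq_mul, Finset.mul_sum]
  rw [Finset.sum_comm]
  refine Finset.sum_congr rfl fun j _ => ?_
  rw [taylor, Finset.sum_mul]
  -- Terms with `m j = 0` vanish; the others are reindexed by `m ↦ m - e_j`.
  rw [← Finset.sum_filter_of_ne (p := fun m => m j ≠ 0)]
  · refine Finset.sum_nbij' (fun m => m - unitIdx j) (fun m => m + unitIdx j) ?_ ?_ ?_ ?_ ?_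
    all_goals intro m hm
    · obtain ⟨hm, hj⟩ := Finset.mem_filter.mp hm
      have e : m - unitIdx j + unitIdx j = m := by
        funext i
        by_cases hi : i = j
        · subst hi; simp; omega
        · simp [hi]
      have := congrArg wt e
      rw [wt_add] at this
      have := mem_jetIdx.mp hm
      refine mem_jetIdx.mpr ?_
      rw [wt_add]
      omega
    · have := mem_jetIdx.mp hm
      rw [wt_add] at this
      refine Finset.mem_filter.mpr ⟨mem_jetIdx.mpr ?_, by simp⟩
      rw [wt_add]
      omega
    · obtain ⟨hm, hj⟩ := Finset.mem_filter.mp hm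
      funext i
      by_cases hi : i = j
      · subst hi; simp; omega
      · simp [hi]
    · simp
    · obtain ⟨hm, hj⟩ := Finset.mem_filter.mp hm
      have e : ℓ + unitIdx j + (m - unitIdx j) = ℓ + m := by
        funext i
        by_cases hi : i = j
        · subst hi; simp; omega
        · simp [hi]
      simp only [if_neg hj]
      rw [e]
      ring
  · intro m _ hne h0
    simp [h0] at hne

/-! ### Mixed partial derivatives -/

lemma contDiff_pderiv1 {d n : ℕ} {f : Rd d → ℝ} (j : Fin d) (hf : ContDiff ℝ ((n + 1 : ℕ)) f) :
    ContDiff ℝ n (pderiv1 j f) := by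
  have : ContDiff ℝ n (fderiv ℝ f) := hf.fderiv_right (by norm_cast)
  exact this.clm_apply contDiff_const

lemma contDiff_pderivPow {d n : ℕ} (j : Fin d) (p : ℕ) {f : Rd d → ℝ}
    (hf : ContDiff ℝ ((n + p : ℕ)) f) : ContDiff ℝ n (pderivPow j p f) := by
  induction p generalizing n with
  | zero => simpa [pderivPow] using hf
  | succ p ih =>
    refine contDiff_pderiv1 j (ih ?_)
    convert hf using 2
    ring

lemma pderiv1_comm {d : ℕ} {f : Rd d → ℝ} (i j : Fin d) (hf : ContDiff ℝ (2 : ℕ) f) :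
    pderiv1 i (pderiv1 j f) = pderiv1 j (pderiv1 i f) := by
  have hd : Differentiable ℝ (fderiv ℝ f) :=
    (hf.fderiv_right (m := 1) (by norm_cast)).differentiable (by norm_num)
  have key : ∀ (a b : Fin d) (x : Rd d), pderiv1 a (pderiv1 b f) x =
      fderiv ℝ (fderiv ℝ f) x (EuclideanSpace.single a 1) (EuclideanSpace.single b 1) := by
    intro a b x
    have h := ((hd x).hasFDerivAt).clm_apply
      (hasFDerivAt_const (EuclideanSpace.single b (1 : ℝ)) x)
    have h' : fderiv ℝ (pderiv1 b f) x = _ := h.fderiv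
    rw [pderiv1, h']
    simp
  funext x
  rw [key, key]
  exact (hf.contDiffAt.isSymmSndFDerivAt (by simp)) _ _

lemma pderivPow_pderiv1 {d : ℕ} (i j : Fin d) (p : ℕ) {f : Rd d → ℝ}
    (hf : ContDiff ℝ ((p + 1 : ℕ)) f) :
    pderivPow i p (pderiv1 j f) = pderiv1 j (pderivPow i p f) := by
  induction p with
  | zero => rfl
  | succ p ih =>
    show pderiv1 i (pderivPow i p (pderiv1 j f)) = pderiv1 j (pderiv1 i (pderivPow i p f))
    rw [ih (hf.of_le (by norm_cast; omega)), pderiv1_comm]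
    refine contDiff_pderivPow i p ?_
    convert hf using 2
    ring

/-- The composition of the operators `∂_j ^ (ℓ j)` for `j` running through a list. -/
def listD {d : ℕ} (L : List (Fin d)) (ℓ : Fin d → ℕ) (f : Rd d → ℝ) : Rd d → ℝ :=
  ((L.map fun j => pderivPow j (ℓ j)).foldr (· ∘ ·) id) f

lemma listD_cons {d : ℕ} (i : Fin d) (L : List (Fin d)) (ℓ : Fin d → ℕ) (f : Rd d → ℝ) :
    listD (i :: L) ℓ f = pderivPow i (ℓ i) (listD L ℓ f) := rfl

lemma Dk_eq_listD {d : ℕ} (ℓ : Fin d → ℕ) (f : Rd d → ℝ) :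
    Dk ℓ f = listD (List.finRange d) ℓ f := by
  rw [Dk, listD, List.ofFn_eq_map]

lemma contDiff_listD {d n : ℕ} (L : List (Fin d)) (ℓ : Fin d → ℕ) {f : Rd d → ℝ}
    (hf : ContDiff ℝ ((n + (L.map ℓ).sum : ℕ)) f) : ContDiff ℝ n (listD L ℓ f) := by
  induction L generalizing n with
  | nil => simpa [listD] using hf
  | cons i L ih =>
    rw [listD_cons]
    refine contDiff_pderivPow i _ (ih ?_)
    convert hf using 2
    simp [add_assoc]

lemma listD_congr {d : ℕ} {L : List (Fin d)} {ℓ ℓ' : Fin d → ℕ} (h : ∀ i ∈ L, ℓ i = ℓ' i)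
    (f : Rd d → ℝ) : listD L ℓ f = listD L ℓ' f := by
  unfold listD
  rw [List.map_congr_left fun i hi => by rw [h i hi]]

lemma listD_add_unitIdx {d : ℕ} (L : List (Fin d)) (hL : L.Nodup) (j : Fin d) (hj : j ∈ L)
    (ℓ : Fin d → ℕ) {f : Rd d → ℝ} (hf : ContDiff ℝ (((L.map ℓ).sum + 1 : ℕ)) f) :
    listD L (ℓ + unitIdx j) f = pderiv1 j (listD L ℓ f) := by
  induction L with
  | nil => simp at hj
  | cons i L ih =>
    obtain ⟨hi, hL'⟩ := List.nodup_cons.mp hL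
    rw [listD_cons, listD_cons]
    by_cases hij : i = j
    · subst hij
      have e : listD L (ℓ + unitIdx i) f = listD L ℓ f := by
        refine listD_congr (fun a ha => ?_) f
        have : a ≠ i := fun h => hi (h ▸ ha)
        simp [this]
      rw [e]
      simp [pderivPow]
    · have hjL : j ∈ L := by
        rcases List.mem_cons.mp hj with h | h
        · exact absurd h.symm hij
        · exact h
      rw [ih hL' hjL (hf.of_le (by norm_cast; simp))]
      have : (ℓ + unitIdx j) i = ℓ i := by simp [hij]
      rw [this]
      refine pderivPow_pderiv1 i j (ℓ i) (contDiff_listD L ℓ ?_)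
      convert hf using 2
      simp
      ring

lemma sum_finRange_map {d : ℕ} (ℓ : Fin d → ℕ) : ((List.finRange d).map ℓ).sum = wt ℓ := by
  rw [wt, ← List.ofFn_eq_map, List.sum_ofFn]

lemma contDiff_Dk {d n k : ℕ} {ℓ : Fin d → ℕ} {f : Rd d → ℝ} (hf : ContDiff ℝ (k : ℕ) f)
    (h : n + wt ℓ ≤ k) : ContDiff ℝ n (Dk ℓ f) := by
  rw [Dk_eq_listD]
  refine contDiff_listD _ _ (hf.of_le ?_)
  rw [sum_finRange_map]
  exact_mod_cast h

lemma Dk_add_unitIdx {d k : ℕ} {ℓ : Fin d → ℕ} {f : Rd d → ℝ} (hf : ContDiff ℝ (k : ℕ) f)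
    (h : wt ℓ < k) (j : Fin d) : Dk (ℓ + unitIdx j) f = pderiv1 j (Dk ℓ f) := by
  rw [Dk_eq_listD, Dk_eq_listD]
  refine listD_add_unitIdx _ (List.nodup_finRange d) j (List.mem_finRange j) ℓ (hf.of_le ?_)
  rw [sum_finRange_map]
  exact_mod_cast h

lemma Dk_zero {d : ℕ} (f : Rd d → ℝ) : Dk (0 : Fin d → ℕ) f = f := by
  rw [Dk_eq_listD]
  generalize List.finRange d = L
  induction L with
  | nil => rfl
  | cons i L ih => rw [listD_cons, ih]; rfl

lemma hasFDerivAt_Dk {d k : ℕ} {ℓ : Fin d → ℕ} {f : Rd d → ℝ} (hf : ContDiff ℝ (k : ℕ) f)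
    (h : wt ℓ < k) (x : Rd d) :
    HasFDerivAt (Dk ℓ f) (lin fun j => Dk (ℓ + unitIdx j) f x) x := by
  have h1 : ContDiff ℝ (1 : ℕ) (Dk ℓ f) := contDiff_Dk hf (by omega)
  have hd : DifferentiableAt ℝ (Dk ℓ f) x := (h1.differentiable (by norm_num)) x
  refine hd.hasFDerivAt.congr_fderiv ?_
  refine ContinuousLinearMap.coe_injective
    ((EuclideanSpace.basisFun (Fin d) ℝ).toBasis.ext fun j => ?_)
  simp only [OrthonormalBasis.coe_toBasis, EuclideanSpace.basisFun_apply,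
    ContinuousLinearMap.coe_coe, lin_single]
  rw [Dk_add_unitIdx hf h]
  rfl

/-! ### The two implications -/

/-- The expansion bounds at order `γ` for a jet `F` of order `k`. -/
def JetBound {d : ℕ} (k : ℕ) (γ : ℝ) (F : (Fin d → ℕ) → Rd d → ℝ) : Prop :=
  ∀ K : Set (Rd d), IsCompact K → ∃ C : ℝ, ∀ ℓ : Fin d → ℕ, wt ℓ ≤ k →
    ∀ x ∈ K, ∀ y ∈ K, |F ℓ y - taylor k F ℓ x y| ≤ C * ‖y - x‖ ^ (γ - wt ℓ)

/-- The bound at `ℓ` forces `F ℓ - taylor k F ℓ x` to be `o(|y - x|)`, so that `F ℓ` is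
differentiable with partial derivatives `F (ℓ + e_j)`. -/
lemma JetBound.hasFDerivAt {d k : ℕ} {γ : ℝ} (hγ : (k : ℝ) < γ) {F : (Fin d → ℕ) → Rd d → ℝ}
    (hF : JetBound k γ F) {ℓ : Fin d → ℕ} (h : wt ℓ < k) (x : Rd d) :
    HasFDerivAt (F ℓ) (lin fun j => F (ℓ + unitIdx j) x) x := by
  obtain ⟨C, hC⟩ := hF (closedBall x 1) (isCompact_closedBall x 1)
  have hp : 1 < γ - wt ℓ := by
    have : (wt ℓ : ℝ) + 1 ≤ k := by exact_mod_cast h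
    linarith
  have h1 : HasFDerivAt (fun y => F ℓ y - taylor k F ℓ x y) (0 : Rd d →L[ℝ] ℝ) x := by
    rw [hasFDerivAt_iff_isLittleO_nhds_zero]
    have hO : (fun v : Rd d => F ℓ (x + v) - taylor k F ℓ x (x + v)
        - (F ℓ x - taylor k F ℓ x x) - (0 : Rd d →L[ℝ] ℝ) v)
        =O[nhds 0] fun v : Rd d => ‖v‖ ^ (γ - wt ℓ) := by
      refine Asymptotics.IsBigO.of_bound C ?_
      filter_upwards [closedBall_mem_nhds (0 : Rd d) one_pos] with v hv
      have hv' : x + v ∈ closedBall x 1 := by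
        simpa [mem_closedBall, dist_eq_norm] using hv
      have := hC ℓ h.le x (mem_closedBall_self zero_le_one) (x + v) hv'
      rw [taylor_self F h.le, Real.norm_of_nonneg (Real.rpow_nonneg (norm_nonneg v) _)]
      simpa using this
    refine hO.trans_isLittleO ?_
    have ht : Tendsto (fun v : Rd d => ‖v‖ ^ (γ - wt ℓ - 1)) (nhds 0) (nhds 0) := by
      have hc : Continuous fun v : Rd d => ‖v‖ ^ (γ - wt ℓ - 1) :=
        continuous_norm.rpow_const fun _ => Or.inr (by linarith)
      have := hc.tendsto 0
      rwa [norm_zero, Real.zero_rpow (by linarith)] at this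
    have h2 : (fun v : Rd d => ‖v‖ ^ (γ - wt ℓ - 1) * ‖v‖) =o[nhds 0] fun v : Rd d => 1 * ‖v‖ :=
      ((Asymptotics.isLittleO_one_iff ℝ).mpr ht).mul_isBigO (Asymptotics.isBigO_refl _ _)
    refine (Asymptotics.IsLittleO.congr h2 (fun v => ?_) fun v => one_mul _).of_norm_right
    rcases eq_or_ne v 0 with rfl | hv
    · rw [norm_zero, mul_zero, Real.zero_rpow (by linarith)]
    · rw [← Real.rpow_add_one (norm_ne_zero_iff.mpr hv)]
      congr 1
      ring
  have h3 := h1.add (hasFDerivAt_taylor (k := k) F ℓ x x)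
  have e1 : (fun y => F ℓ y - taylor k F ℓ x y) + taylor k F ℓ x = F ℓ := by
    funext y
    simp
  rw [e1, zero_add] at h3
  have e2 : (fun j => taylor k F (ℓ + unitIdx j) x x) = fun j => F (ℓ + unitIdx j) x := by
    funext j
    refine taylor_self F ?_ x
    rw [wt_add, wt_unitIdx]
    exact h
  rwa [e2] at h3

lemma contDiff_of_hasFDerivAt {d k : ℕ} {F : (Fin d → ℕ) → Rd d → ℝ}
    (hc : ∀ ℓ : Fin d → ℕ, wt ℓ ≤ k → Continuous (F ℓ))
    (hF : ∀ ℓ : Fin d → ℕ, wt ℓ < k → ∀ x,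
      HasFDerivAt (F ℓ) (lin fun j => F (ℓ + unitIdx j) x) x)
    (n : ℕ) (ℓ : Fin d → ℕ) (h : wt ℓ + n ≤ k) : ContDiff ℝ n (F ℓ) := by
  induction n generalizing ℓ with
  | zero => exact_mod_cast contDiff_zero.mpr (hc ℓ (by omega))
  | succ n ih =>
    have : ContDiff ℝ ((n : WithTop ℕ∞) + 1) (F ℓ) := by
      refine contDiff_succ_iff_hasFDerivAt.mpr
        ⟨fun x => lin fun j => F (ℓ + unitIdx j) x, ?_, hF ℓ (by omega)⟩
      unfold lin
      refine ContDiff.sum fun j _ => ContDiff.smul (ih _ ?_) contDiff_const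
      rw [wt_add, wt_unitIdx]
      omega
    exact_mod_cast this

lemma eq_Dk_of_hasFDerivAt {d k : ℕ} {F : (Fin d → ℕ) → Rd d → ℝ} {f : Rd d → ℝ}
    (hf : ContDiff ℝ (k : ℕ) f) (h0 : F 0 = f)
    (hF : ∀ ℓ : Fin d → ℕ, wt ℓ < k → ∀ x,
      HasFDerivAt (F ℓ) (lin fun j => F (ℓ + unitIdx j) x) x)
    (n : ℕ) (ℓ : Fin d → ℕ) (hn : wt ℓ = n) (h : n ≤ k) : F ℓ = Dk ℓ f := by
  induction n generalizing ℓ with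
  | zero => rw [wt_eq_zero hn, Dk_zero, h0]
  | succ n ih =>
    obtain ⟨ℓ', j, hℓ', rfl⟩ := exists_eq_add_unitIdx hn
    rw [Dk_add_unitIdx hf (by omega), ← ih ℓ' hℓ' (by omega)]
    funext x
    rw [pderiv1, (hF ℓ' (by omega) x).fderiv, lin_single]

/-- Taylor's formula with Hölder remainder on a convex set, by downward induction on `|ℓ|`: the
`j`-th partial derivative of the remainder at `ℓ` is the remainder at `ℓ + e_j`, and the mean value
inequality gains one power of `‖y - x‖`. -/
lemma taylor_remainder_le {d k : ℕ} {γ : ℝ} (hγ : (k : ℝ) < γ)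
    {F : (Fin d → ℕ) → Rd d → ℝ}
    (hF : ∀ ℓ : Fin d → ℕ, wt ℓ < k → ∀ x,
      HasFDerivAt (F ℓ) (lin fun j => F (ℓ + unitIdx j) x) x)
    {B : Set (Rd d)} (hB : Convex ℝ B) {C : ℝ} (hC0 : 0 ≤ C)
    (hC : ∀ ℓ : Fin d → ℕ, wt ℓ = k → ∀ x ∈ B, ∀ y ∈ B,
      |F ℓ y - F ℓ x| ≤ C * ‖y - x‖ ^ (γ - k))
    (n : ℕ) (ℓ : Fin d → ℕ) (hn : wt ℓ + n = k) (x : Rd d) (hx : x ∈ B) (y : Rd d) (hy : y ∈ B) :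
    |F ℓ y - taylor k F ℓ x y| ≤ (d : ℝ) ^ n * C * ‖y - x‖ ^ (γ - wt ℓ) := by
  induction n generalizing ℓ y with
  | zero =>
    have hk : wt ℓ = k := by omega
    rw [taylor_top F hk, hk, pow_zero, one_mul]
    exact hC ℓ hk x hx y hy
  | succ n ih =>
    have hlt : wt ℓ < k := by omega
    have hp : 0 ≤ γ - wt ℓ - 1 := by
      have : (wt ℓ : ℝ) + 1 ≤ k := by exact_mod_cast hlt
      linarith
    set M : ℝ := (d : ℝ) ^ (n + 1) * C * ‖y - x‖ ^ (γ - wt ℓ - 1) with hM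
    have hder : ∀ z ∈ segment ℝ x y, HasFDerivWithinAt (fun z => F ℓ z - taylor k F ℓ x z)
        ((lin fun j => F (ℓ + unitIdx j) z) - lin fun j => taylor k F (ℓ + unitIdx j) x z)
        (segment ℝ x y) z := fun z _ =>
      ((hF ℓ hlt z).sub (hasFDerivAt_taylor F ℓ x z)).hasFDerivWithinAt
    have hbd : ∀ z ∈ segment ℝ x y,
        ‖(lin fun j => F (ℓ + unitIdx j) z) - lin fun j => taylor k F (ℓ + unitIdx j) x z‖
          ≤ M := by
      intro z hz
      have e : ((lin fun j => F (ℓ + unitIdx j) z) - lin fun j => taylor k F (ℓ + unitIdx j) x z)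
          = lin fun j => F (ℓ + unitIdx j) z - taylor k F (ℓ + unitIdx j) x z := by
        simp [lin, sub_smul, Finset.sum_sub_distrib]
      rw [e]
      refine (norm_lin_le _).trans ?_
      have hzx : ‖z - x‖ ≤ ‖y - x‖ := by
        obtain ⟨t, ⟨ht0, ht1⟩, rfl⟩ := (segment_eq_image' ℝ x y) ▸ hz
        rw [add_sub_cancel_left, norm_smul, Real.norm_of_nonneg ht0]
        exact mul_le_of_le_one_left (norm_nonneg _) ht1
      have hj : ∀ j ∈ (Finset.univ : Finset (Fin d)),
          |F (ℓ + unitIdx j) z - taylor k F (ℓ + unitIdx j) x z|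
            ≤ (d : ℝ) ^ n * C * ‖y - x‖ ^ (γ - wt ℓ - 1) := by
        intro j _
        have hw : wt (ℓ + unitIdx j) = wt ℓ + 1 := by rw [wt_add, wt_unitIdx]
        have := ih (ℓ + unitIdx j) (by omega) z (hB.segment_subset hx hy hz)
        rw [hw] at this
        push_cast at this
        rw [← sub_sub] at this
        refine this.trans ?_
        gcongr
      refine (Finset.sum_le_sum hj).trans (le_of_eq ?_)
      rw [Finset.sum_const, Finset.card_univ, Fintype.card_fin, nsmul_eq_mul, hM]
      ring
    have hmv := (convex_segment x y).norm_image_sub_le_of_norm_hasFDerivWithin_le hder hbd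
      (left_mem_segment ℝ x y) (right_mem_segment ℝ x y)
    simp only [taylor_self F hlt.le, sub_self, sub_zero, Real.norm_eq_abs] at hmv
    refine hmv.trans (le_of_eq ?_)
    rw [hM, mul_assoc]
    congr 1
    rcases eq_or_ne (y - x) 0 with h0 | h0
    · rw [h0, norm_zero, mul_zero, Real.zero_rpow (by linarith)]
    · rw [← Real.rpow_add_one (norm_ne_zero_iff.mpr h0)]
      congr 1
      ring

lemma jetBound_Dk {d k : ℕ} {γ : ℝ} (hγ : (k : ℝ) < γ) {f : Rd d → ℝ}
    (hf : ContDiff ℝ (k : ℕ) f)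
    (hH : ∀ K : Set (Rd d), IsCompact K → ∃ C : ℝ, ∀ ℓ : Fin d → ℕ, wt ℓ = k →
      ∀ x ∈ K, ∀ y ∈ K, |Dk ℓ f y - Dk ℓ f x| ≤ C * ‖y - x‖ ^ (γ - k)) :
    JetBound k γ fun ℓ => Dk ℓ f := by
  intro K hK
  -- Enlarge `K` to a ball, so that segments between its points stay inside.
  obtain ⟨R, hR⟩ := hK.isBounded.subset_closedBall 0
  obtain ⟨C, hC⟩ := hH (closedBall 0 R) (isCompact_closedBall 0 R)
  refine ⟨((d : ℝ) + 1) ^ k * max C 0, fun ℓ hℓ x hx y hy => ?_⟩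
  have := taylor_remainder_le hγ (F := fun ℓ => Dk ℓ f) (fun ℓ h x => hasFDerivAt_Dk hf h x)
    (convex_closedBall (0 : Rd d) R) (le_max_right C 0)
    (fun ℓ h x hx y hy => (hC ℓ h x hx y hy).trans
      (mul_le_mul_of_nonneg_right (le_max_left C 0) (Real.rpow_nonneg (norm_nonneg _) _)))
    (k - wt ℓ) ℓ (by omega) x (hR hx) y (hR hy)
  refine this.trans ?_
  have hpow : (d : ℝ) ^ (k - wt ℓ) ≤ ((d : ℝ) + 1) ^ k :=
    (pow_le_pow_left₀ (Nat.cast_nonneg d) (by linarith) _).trans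
      (pow_le_pow_right₀ (by linarith [(Nat.cast_nonneg d : (0 : ℝ) ≤ d)]) (Nat.sub_le _ _))
  have : 0 ≤ max C 0 := le_max_right C 0
  gcongr

/-- For `γ ∈ (k, k+1)`, a function `f : ℝ^d → ℝ` is locally of class `C^γ` if and only if
it admits a family of "Taylor coefficients" `(F_ℓ)_{|ℓ| ≤ k}` with `F_0 = f` satisfying the
local expansion bounds of `D^γ` for the canonical polynomial model; in that case one
necessarily has `F_ℓ = D^ℓ f`. -/
theorem holder_eq_polynomial_model_Dgamma
    (d k : ℕ) (hd : 1 ≤ d) (γ : ℝ) (hγ₁ : (k : ℝ) < γ) (hγ₂ : γ < k + 1)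
    (f : Rd d → ℝ) :
    ((ContDiff ℝ (k : ℕ∞) f ∧
      ∀ K : Set (Rd d), IsCompact K → ∃ C : ℝ, ∀ ℓ : Fin d → ℕ, wt ℓ = k →
        ∀ x ∈ K, ∀ y ∈ K, |Dk ℓ f y - Dk ℓ f x| ≤ C * ‖y - x‖ ^ (γ - k)) ↔
     (∃ F : (Fin d → ℕ) → Rd d → ℝ,
        (∀ ℓ : Fin d → ℕ, wt ℓ ≤ k → Continuous (F ℓ)) ∧
        F (fun _ => 0) = f ∧
        ∀ K : Set (Rd d), IsCompact K → ∃ C : ℝ, ∀ ℓ : Fin d → ℕ, wt ℓ ≤ k →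
          ∀ x ∈ K, ∀ y ∈ K,
            |F ℓ y - ∑ m ∈ (Finset.Iic fun _ : Fin d => k).filter
                (fun m => wt ℓ + wt m ≤ k),
                (mono m (y - x) / (mfac m : ℝ)) * F (ℓ + m) x|
              ≤ C * ‖y - x‖ ^ (γ - wt ℓ))) ∧
    (∀ F : (Fin d → ℕ) → Rd d → ℝ,
      (∀ ℓ : Fin d → ℕ, wt ℓ ≤ k → Continuous (F ℓ)) →
      F (fun _ => 0) = f →
      (∀ K : Set (Rd d), IsCompact K → ∃ C : ℝ, ∀ ℓ : Fin d → ℕ, wt ℓ ≤ k →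
        ∀ x ∈ K, ∀ y ∈ K,
          |F ℓ y - ∑ m ∈ (Finset.Iic fun _ : Fin d => k).filter
              (fun m => wt ℓ + wt m ≤ k),
              (mono m (y - x) / (mfac m : ℝ)) * F (ℓ + m) x|
            ≤ C * ‖y - x‖ ^ (γ - wt ℓ)) →
      ∀ ℓ : Fin d → ℕ, wt ℓ ≤ k → ∀ x : Rd d, F ℓ x = Dk ℓ f x) := by
  have huniq : ∀ F : (Fin d → ℕ) → Rd d → ℝ, (∀ ℓ : Fin d → ℕ, wt ℓ ≤ k → Continuous (F ℓ)) →
      F (fun _ => 0) = f → JetBound k γ F →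
      ContDiff ℝ (k : ℕ) f ∧ ∀ ℓ : Fin d → ℕ, wt ℓ ≤ k → F ℓ = Dk ℓ f := by
    intro F hc h0 hF
    have hder : ∀ ℓ : Fin d → ℕ, wt ℓ < k → ∀ x,
        HasFDerivAt (F ℓ) (lin fun j => F (ℓ + unitIdx j) x) x :=
      fun ℓ h x => hF.hasFDerivAt hγ₁ h x
    have h0' : F 0 = f := h0
    have hcd : ContDiff ℝ (k : ℕ) f := by
      rw [← h0']
      exact contDiff_of_hasFDerivAt hc hder k 0 (by rw [wt_zero]; omega)
    exact ⟨hcd, fun ℓ h => eq_Dk_of_hasFDerivAt hcd h0' hder _ ℓ rfl h⟩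
  refine ⟨⟨fun ⟨hf, hH⟩ => ?_, fun ⟨F, hc, h0, hF⟩ => ?_⟩, fun F hc h0 hF ℓ hℓ x => ?_⟩
  · have hf' : ContDiff ℝ (k : ℕ) f := by exact_mod_cast hf
    refine ⟨fun ℓ => Dk ℓ f, fun ℓ hℓ => ?_, Dk_zero f, jetBound_Dk hγ₁ hf' hH⟩
    exact (contDiff_Dk (n := 0) hf' (by omega)).continuous
  · obtain ⟨hcd, heq⟩ := huniq F hc h0 hF
    refine ⟨by exact_mod_cast hcd, fun K hK => ?_⟩
    obtain ⟨C, hC⟩ := hF K hK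
    refine ⟨C, fun ℓ hℓ x hx y hy => ?_⟩
    have : |F ℓ y - taylor k F ℓ x y| ≤ C * ‖y - x‖ ^ (γ - wt ℓ) := hC ℓ hℓ.le x hx y hy
    rwa [taylor_top F hℓ, hℓ, heq ℓ hℓ.le] at this
  · rw [(huniq F hc h0 hF).2 ℓ hℓ]
end
end

section
/- Let α ∈ (1/3, 1/2], n ≥ 1, T > 0. Let X : [0,T] → ℝ^n and 𝕏 : [0,T]² → ℝ^{n×n} be continuous and satisfy, for some constant C and all s,u,t ∈ [0,T]: |X_t − X_s| ≤ C|t−s|^α, |𝕏_{s,t}| ≤ C|t−s|^{2α}, and Chen's relation 𝕏_{s,t} − 𝕏_{s,u} − 𝕏_{u,t} = X_{s,u} ⊗ X_{u,t} (i.e. 𝕏^{i,j}_{s,t} − 𝕏^{i,j}_{s,u} − 𝕏^{i,j}_{u,t} = (X^i_u − X^i_s)(X^j_t − X^j_u) for all i,j). Let Y : [0,T] → ℝ and Y' : [0,T] → ℝ^n satisfy |Y_t − Y_s − Σ_{i=1}^n Y'_i(s)(X^i_t − X^i_s)| ≤ C|t−s|^{2α} and |Y'(t) − Y'(s)| ≤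 C|t−s|^α for all s,t ∈ [0,T]. Then for every j ∈ {1,…,n} there exists a function Z : [0,T] → ℝ and a constant C' such that |Z_t − Z_s − Y_s (X^j_t − X^j_s) − Σ_{i=1}^n Y'_i(s) 𝕏^{i,j}_{s,t}| ≤ C' |t−s|^{3α} for all s,t ∈ [0,T]; moreover Z is unique up to an additive constant. (Z provides a consistent definition of the rough integral ∫ Y dX^j.) -/
open Set

noncomputable section

/-!
The statement is an instance of the sewing lemma for the germ
`A s t = Y_s X^j_{s,t} + Σ_i Y'_i(s) 𝕏^{i,j}_{s,t}` with exponent `θ = 3α > 1`.  By Chen's relation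
its defect is
`A s t - A s u - A u t = -(Y_{s,u} - Y'_s X_{s,u}) X^j_{u,t} - Σ_i (Y'_{s,u})_i 𝕏^{i,j}_{u,t}`,
which is `O((|u - s| + |t - u|)^{3α})`.

Existence.  The central estimate (`abs_sum_germ_sub_le`) says that the sum of `A` along any finite
increasing chain from `s` to `t` differs from `A s t` by at most `K' (t - s)^θ`, with `K'`
independent of the chain.  It is proved by induction on the number of points: removing the link of
the chain which contains the midpoint leaves two chains of length at most `(t - s) / 2`, and
`2 (1/2)^θ < 1` lets the recursion close.  Hence for every finite set `F` of times there is a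
function `Z_F` satisfying the required inequality at all times of `F`
(`exists_sewing_on_finset`), and a pointwise limit of the `Z_F` along an ultrafilter finer than
`F → ∞` satisfies it everywhere (`exists_sewing`).  No convergence of Riemann sums is needed.

Uniqueness.  The difference of two solutions is Hölder of exponent `θ > 1` on an interval, hence
constant: halving the interval repeatedly improves the Hölder constant by the factor
`2 (1/2)^θ < 1` each time (`eq_of_holder_gt_one`).
-/

open Filter Topology

lemma two_mul_half_rpow_lt_one {θ : ℝ} (hθ : 1 < θ) : 2 * (1 / 2 : ℝ) ^ θ < 1 := by
  have h : (1 / 2 : ℝ) ^ θ < (1 / 2 : ℝ) ^ (1 : ℝ) :=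
    Real.rpow_lt_rpow_of_exponent_gt (by norm_num) (by norm_num) hθ
  rw [Real.rpow_one] at h
  linarith

/-- A function on a convex set of reals with Hölder exponent larger than one is constant. -/
lemma eq_of_holder_gt_one {θ : ℝ} (hθ : 1 < θ) {D : Set ℝ} (hD : Convex ℝ D) {W : ℝ → ℝ} {C : ℝ}
    (hW : ∀ s ∈ D, ∀ t ∈ D, |W t - W s| ≤ C * |t - s| ^ θ) :
    ∀ s ∈ D, ∀ t ∈ D, W t = W s := by
  set q : ℝ := 2 * (1 / 2 : ℝ) ^ θ with hq
  have hq1 : q < 1 := two_mul_half_rpow_lt_one hθ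
  have hq0 : 0 ≤ q := by positivity
  have key : ∀ N : ℕ, ∀ s ∈ D, ∀ t ∈ D, |W t - W s| ≤ q ^ N * (C * |t - s| ^ θ) := by
    intro N
    induction N with
    | zero => simpa using hW
    | succ N ih =>
      intro s hs t ht
      have hm : (1 / 2 : ℝ) * s + (1 / 2 : ℝ) * t ∈ D := by
        have := hD hs ht (a := 1 / 2) (b := 1 / 2) (by norm_num) (by norm_num) (by norm_num)
        simpa using this
      have h1 := ih s hs _ hm
      have h2 := ih _ hm t ht
      have e1 : |(1 / 2 : ℝ) * s + (1 / 2 : ℝ) * t - s| = 1 / 2 * |t - s| := by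
        rw [show (1 / 2 : ℝ) * s + (1 / 2 : ℝ) * t - s = 1 / 2 * (t - s) by ring, abs_mul]
        norm_num
      have e2 : |t - ((1 / 2 : ℝ) * s + (1 / 2 : ℝ) * t)| = 1 / 2 * |t - s| := by
        rw [show t - ((1 / 2 : ℝ) * s + (1 / 2 : ℝ) * t) = 1 / 2 * (t - s) by ring, abs_mul]
        norm_num
      rw [e1, Real.mul_rpow (by norm_num) (abs_nonneg _)] at h1
      rw [e2, Real.mul_rpow (by norm_num) (abs_nonneg _)] at h2
      have h3 := abs_sub_le (W t) (W ((1 / 2 : ℝ) * s + (1 / 2 : ℝ) * t)) (W s)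
      calc |W t - W s| ≤ _ := h3
        _ ≤ _ := add_le_add h2 h1
        _ = q ^ (N + 1) * (C * |t - s| ^ θ) := by rw [hq]; ring
  intro s hs t ht
  have hlim : Tendsto (fun N : ℕ => q ^ N * (C * |t - s| ^ θ)) atTop (𝓝 (0 * (C * |t - s| ^ θ))) :=
    (tendsto_pow_atTop_nhds_zero_of_lt_one hq0 hq1).mul_const _
  rw [zero_mul] at hlim
  have h0 : |W t - W s| ≤ 0 := ge_of_tendsto' hlim fun N => key N s hs t ht
  exact sub_eq_zero.1 (abs_nonpos_iff.1 h0)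

/-- The maximal inequality behind the sewing lemma: the sum of the germ `A` along a monotone chain
is close to `A` evaluated at the end points, uniformly in the chain. -/
lemma abs_sum_germ_sub_le {θ : ℝ} (hθ : 1 < θ) {D : Set ℝ} {A : ℝ → ℝ → ℝ} {K : ℝ} (hK : 0 ≤ K)
    (hA0 : ∀ s ∈ D, A s s = 0)
    (hA : ∀ s ∈ D, ∀ u ∈ D, ∀ t ∈ D,
      |A s t - A s u - A u t| ≤ K * (|u - s| + |t - u|) ^ θ)
    {p : ℕ → ℝ} (hp : Monotone p) (hpD : ∀ k, p k ∈ D) :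
    ∀ i j : ℕ, i ≤ j → |∑ k ∈ Finset.Ico i j, A (p k) (p (k + 1)) - A (p i) (p j)|
      ≤ 2 * K / (1 - 2 * (1 / 2 : ℝ) ^ θ) * (p j - p i) ^ θ := by
  set q : ℝ := 2 * (1 / 2 : ℝ) ^ θ with hq
  have hq1 : 0 < 1 - q := by
    have := two_mul_half_rpow_lt_one hθ
    linarith
  set M : ℝ := 2 * K / (1 - q) with hM
  have hM0 : 0 ≤ M := by positivity
  have hMq : M * q + 2 * K = M := by
    rw [hM]; field_simp; ring
  have hθ0 : 0 ≤ θ := by linarith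
  -- the defect bound for ordered times inside an interval `[a, b]`
  have hA' : ∀ i u j a b, a ≤ i → i ≤ u → u ≤ j → j ≤ b →
      |A (p i) (p j) - A (p i) (p u) - A (p u) (p j)| ≤ K * (p b - p a) ^ θ := by
    intro i u j a b hai hiu huj hjb
    have h1 := hp hai
    have h2 := hp hiu
    have h3 := hp huj
    have h4 := hp hjb
    refine (hA _ (hpD i) _ (hpD u) _ (hpD j)).trans ?_
    rw [abs_of_nonneg (by linarith), abs_of_nonneg (by linarith)]
    gcongr
    · linarith
  suffices H : ∀ d i j : ℕ, i ≤ j → j - i ≤ d →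
      |∑ k ∈ Finset.Ico i j, A (p k) (p (k + 1)) - A (p i) (p j)| ≤ M * (p j - p i) ^ θ from
    fun i j hij => H (j - i) i j hij le_rfl
  intro d
  induction d with
  | zero =>
    intro i j hij hd
    obtain rfl : i = j := by omega
    simp [hA0 _ (hpD i), Real.zero_rpow (by linarith : θ ≠ 0)]
  | succ d ih =>
    intro i j hij hd
    rcases hij.eq_or_lt with rfl | hlt
    · simp [hA0 _ (hpD i), Real.zero_rpow (by linarith : θ ≠ 0)]
    have hpij := hp hij
    -- the link `[p m, p (m + 1)]` contains the midpoint
    obtain ⟨m, him, hmj, hm1, hm2⟩ : ∃ m, i ≤ m ∧ m < j ∧ p m ≤ (p i + p j) / 2 ∧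
        (p i + p j) / 2 ≤ p (m + 1) := by
      classical
      have hex : ∃ k, i ≤ k ∧ (p i + p j) / 2 ≤ p (k + 1) :=
        ⟨j - 1, by omega, by rw [show j - 1 + 1 = j by omega]; linarith⟩
      obtain ⟨h1, h2⟩ := Nat.find_spec hex
      have hle : Nat.find hex ≤ j - 1 := Nat.find_min' hex
        ⟨by omega, by rw [show j - 1 + 1 = j by omega]; linarith⟩
      refine ⟨Nat.find hex, h1, by omega, ?_, h2⟩
      rcases h1.eq_or_lt with he | hl
      · rw [← he]; linarith
      · have hmin := Nat.find_min hex (m := Nat.find hex - 1) (by omega)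
        by_contra hcon
        refine hmin ⟨by omega, ?_⟩
        rw [show Nat.find hex - 1 + 1 = Nat.find hex by omega]
        linarith
    have hl := ih i m him (by omega)
    have hr := ih (m + 1) j hmj (by omega)
    have d1 := hA' i m j i j le_rfl him hmj.le le_rfl
    have d2 := hA' m (m + 1) j i j him (by omega) hmj le_rfl
    have hpow : (1 / 2 * (p j - p i)) ^ θ = (1 / 2 : ℝ) ^ θ * (p j - p i) ^ θ :=
      Real.mul_rpow (by norm_num) (by linarith)
    have hl' : M * (p m - p i) ^ θ ≤ M * ((1 / 2 : ℝ) ^ θ * (p j - p i) ^ θ) := by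
      rw [← hpow]
      have := hp him
      gcongr
      · linarith
    have hr' : M * (p j - p (m + 1)) ^ θ ≤ M * ((1 / 2 : ℝ) ^ θ * (p j - p i) ^ θ) := by
      rw [← hpow]
      have : p (m + 1) ≤ p j := hp hmj
      gcongr
      · linarith
    have hsum : ∑ k ∈ Finset.Ico i j, A (p k) (p (k + 1)) =
        ∑ k ∈ Finset.Ico i m, A (p k) (p (k + 1)) + (A (p m) (p (m + 1)) +
          ∑ k ∈ Finset.Ico (m + 1) j, A (p k) (p (k + 1))) := by
      rw [← Finset.sum_Ico_consecutive _ him hmj.le, Finset.sum_eq_sum_Ico_succ_bot hmj]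
    have hfin : M * (p j - p i) ^ θ = 2 * (M * ((1 / 2 : ℝ) ^ θ * (p j - p i) ^ θ)) +
        2 * (K * (p j - p i) ^ θ) := by
      calc M * (p j - p i) ^ θ = (M * q + 2 * K) * (p j - p i) ^ θ := by rw [hMq]
        _ = _ := by rw [hq]; ring
    rw [hsum, hfin]
    rw [abs_le] at hl hr d1 d2 ⊢
    constructor <;> linarith [hl.1, hl.2, hr.1, hr.2, d1.1, d1.2, d2.1, d2.2]

/-- On a finite set of times, summing the germ along consecutive times gives a solution of the
sewing problem, with a constant that does not depend on the finite set. -/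
lemma exists_sewing_on_finset {θ : ℝ} (hθ : 1 < θ) {D : Set ℝ} {A : ℝ → ℝ → ℝ} {K : ℝ} (hK : 0 ≤ K)
    (hA0 : ∀ s ∈ D, A s s = 0)
    (hA : ∀ s ∈ D, ∀ u ∈ D, ∀ t ∈ D,
      |A s t - A s u - A u t| ≤ K * (|u - s| + |t - u|) ^ θ) (F : Finset D) :
    ∃ Z : D → ℝ, ∀ s ∈ F, ∀ t ∈ F, |Z t - Z s - A s t|
      ≤ (2 * K / (1 - 2 * (1 / 2 : ℝ) ^ θ) + K * 2 ^ θ) * |(t : ℝ) - s| ^ θ := by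
  classical
  rcases F.eq_empty_or_nonempty with rfl | hne
  · exact ⟨0, by simp⟩
  have hpos : 0 < F.card := hne.card_pos
  -- increasing enumeration of `F`, continued by its last element
  set e : ℕ → D := fun k => F.orderEmbOfFin rfl ⟨min k (F.card - 1), by omega⟩ with he
  have hemono : Monotone e := by
    intro a b hab
    refine (F.orderEmbOfFin rfl).monotone ?_
    rw [Fin.mk_le_mk]
    omega
  have hesurj : ∀ t ∈ F, ∃ k, e k = t := by
    intro t ht
    have : t ∈ Set.range (F.orderEmbOfFin rfl) := by
      rw [Finset.range_orderEmbOfFin]; exact ht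
    obtain ⟨k, hk⟩ := this
    refine ⟨k, ?_⟩
    rw [← hk]
    refine congrArg (F.orderEmbOfFin rfl) (Fin.ext ?_)
    have := k.2
    change min (k : ℕ) (F.card - 1) = k
    omega
  choose! idx hidx using hesurj
  have hmax := abs_sum_germ_sub_le hθ hK hA0 hA (p := fun k => (e k : ℝ))
    (fun a b hab => hemono hab) (fun k => (e k).2)
  set M : ℝ := 2 * K / (1 - 2 * (1 / 2 : ℝ) ^ θ) with hM
  refine ⟨fun t => ∑ k ∈ Finset.range (idx t), A (e k) (e (k + 1)), ?_⟩
  set Z : D → ℝ := fun t => ∑ k ∈ Finset.range (idx t), A (e k) (e (k + 1)) with hZ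
  have hord : ∀ s ∈ F, ∀ t ∈ F, s < t → |Z t - Z s - A s t| ≤ M * |(t : ℝ) - s| ^ θ := by
    intro s hs t ht hst
    have hlt : idx s ≤ idx t := by
      by_contra hcon
      have := hemono (not_le.1 hcon).le
      rw [hidx s hs, hidx t ht] at this
      exact absurd hst (not_lt.2 this)
    have h := hmax (idx s) (idx t) hlt
    simp only [hidx s hs, hidx t ht] at h
    have hst' : (s : ℝ) < t := hst
    rw [abs_of_pos (sub_pos.2 hst')]
    rwa [Finset.sum_Ico_eq_sub _ hlt] at h
  intro s hs t ht
  have hP : 0 ≤ |(t : ℝ) - s| ^ θ := Real.rpow_nonneg (abs_nonneg _) _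
  have h2 : (0 : ℝ) ≤ 2 ^ θ := Real.rpow_nonneg (by norm_num) _
  have hKP : 0 ≤ K * 2 ^ θ * |(t : ℝ) - s| ^ θ := by positivity
  rcases lt_trichotomy s t with hst | rfl | hst
  · have := hord s hs t ht hst
    rw [add_mul]
    linarith
  · simp [hA0 _ s.2, Real.zero_rpow (by linarith : θ ≠ 0)]
  · have h := hord t ht s hs hst
    have h' := hA s s.2 t t.2 s s.2
    rw [hA0 _ s.2, abs_sub_comm (s : ℝ) t, ← two_mul, Real.mul_rpow (by norm_num) (abs_nonneg _)]
      at h'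
    rw [abs_sub_comm (s : ℝ) t] at h
    rw [add_mul]
    rw [abs_le] at h h' ⊢
    constructor <;> linarith [h.1, h.2, h'.1, h'.2]

/-- Sewing lemma, existence part, on an arbitrary set of times. -/
lemma exists_sewing {θ : ℝ} (hθ : 1 < θ) {D : Set ℝ} {A : ℝ → ℝ → ℝ} {K : ℝ} (hK : 0 ≤ K)
    (hA0 : ∀ s ∈ D, A s s = 0)
    (hA : ∀ s ∈ D, ∀ u ∈ D, ∀ t ∈ D,
      |A s t - A s u - A u t| ≤ K * (|u - s| + |t - u|) ^ θ) :
    ∃ Z : ℝ → ℝ, ∃ C' : ℝ, ∀ s ∈ D, ∀ t ∈ D, |Z t - Z s - A s t| ≤ C' * |t - s| ^ θ := by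
  classical
  rcases D.eq_empty_or_nonempty with rfl | ⟨o, ho⟩
  · exact ⟨0, 0, by simp⟩
  choose ZF hZF using exists_sewing_on_finset hθ hK hA0 hA
  set M : ℝ := 2 * K / (1 - 2 * (1 / 2 : ℝ) ^ θ) + K * 2 ^ θ
  let U : Ultrafilter (Finset D) := Ultrafilter.of atTop
  have hU : (U : Filter (Finset D)) ≤ atTop := Ultrafilter.of_le _
  have hmem : ∀ t : D, ∀ᶠ F in (U : Filter (Finset D)), t ∈ F := by
    intro t
    have : ∀ᶠ F in (atTop : Filter (Finset D)), {t} ≤ F := eventually_ge_atTop _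
    exact hU (this.mono fun F hF => hF (Finset.mem_singleton_self t))
  -- normalising at the base point `o` makes the values at each fixed time bounded in `F`
  have hlim : ∀ t : D, ∃ z : ℝ, Tendsto (fun F => ZF F t - ZF F ⟨o, ho⟩) U (𝓝 z) := by
    intro t
    set B : ℝ := M * |(t : ℝ) - o| ^ θ
    have hB : ∀ᶠ F in (U : Filter (Finset D)),
        ZF F t - ZF F ⟨o, ho⟩ ∈ Icc (A o t - B) (A o t + B) := by
      filter_upwards [hmem t, hmem ⟨o, ho⟩] with F h1 h2
      have := abs_le.1 (hZF F _ h2 _ h1)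
      constructor <;> linarith [this.1, this.2]
    obtain ⟨z, -, hz⟩ := (isCompact_Icc (a := A o t - B) (b := A o t + B)).ultrafilter_le_nhds'
      (U.map fun F => ZF F t - ZF F ⟨o, ho⟩) hB
    exact ⟨z, hz⟩
  choose z hz using hlim
  refine ⟨fun t => if h : t ∈ D then z ⟨t, h⟩ else 0, M, ?_⟩
  intro s hs t ht
  simp only [hs, ht, dif_pos]
  have hl := (((hz ⟨t, ht⟩).sub (hz ⟨s, hs⟩)).sub_const (A s t)).abs
  refine le_of_tendsto hl ?_
  filter_upwards [hmem ⟨s, hs⟩, hmem ⟨t, ht⟩] with F h1 h2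
  simpa using hZF F _ h1 _ h2

/-- **Rough integration** (Lemma `lem:RP`): given an `α`-Hölder rough path `(X, 𝕏)` with
`α ∈ (1/3, 1/2]` and a controlled rough path `(Y, Y')`, for each coordinate `j` there exists
a function `Z`, unique up to an additive constant, such that
`Z_t - Z_s = Y_s X^j_{s,t} + Σ_i Y'_i(s) 𝕏^{i,j}_{s,t} + O(|t-s|^{3α})`. -/
theorem rough_integral_exists_unique
    (n : ℕ) (hn : 1 ≤ n) (T : ℝ) (hT : 0 < T) (α : ℝ) (hα₁ : 1/3 < α) (hα₂ : α ≤ 1/2)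
    (X : ℝ → Fin n → ℝ) (XX : ℝ → ℝ → Fin n → Fin n → ℝ)
    (hXcont : ∀ i, ContinuousOn (fun t => X t i) (Icc 0 T))
    (hXXcont : ∀ i j, ContinuousOn (fun p : ℝ × ℝ => XX p.1 p.2 i j) (Icc 0 T ×ˢ Icc 0 T))
    (Y : ℝ → ℝ) (Y' : ℝ → Fin n → ℝ)
    (C : ℝ)
    -- analytic bounds on the rough path
    (hX : ∀ i, ∀ s ∈ Icc 0 T, ∀ t ∈ Icc 0 T, |X t i - X s i| ≤ C * |t - s| ^ α)
    (hXX : ∀ i j, ∀ s ∈ Icc 0 T, ∀ t ∈ Icc 0 T, |XX s t i j| ≤ C * |t - s| ^ (2 * α))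
    -- Chen's relation
    (hChen : ∀ i j, ∀ s ∈ Icc 0 T, ∀ u ∈ Icc 0 T, ∀ t ∈ Icc 0 T,
      XX s t i j - XX s u i j - XX u t i j = (X u i - X s i) * (X t j - X u j))
    -- (Y, Y') is controlled by X
    (hY : ∀ s ∈ Icc 0 T, ∀ t ∈ Icc 0 T,
      |Y t - Y s - ∑ i, Y' s i * (X t i - X s i)| ≤ C * |t - s| ^ (2 * α))
    (hY' : ∀ s ∈ Icc 0 T, ∀ t ∈ Icc 0 T, ∀ i, |Y' t i - Y' s i| ≤ C * |t - s| ^ α)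
    (j : Fin n) :
    (∃ Z : ℝ → ℝ, ∃ C' : ℝ, ∀ s ∈ Icc 0 T, ∀ t ∈ Icc 0 T,
      |Z t - Z s - Y s * (X t j - X s j) - ∑ i, Y' s i * XX s t i j|
        ≤ C' * |t - s| ^ (3 * α)) ∧
    (∀ Z₁ Z₂ : ℝ → ℝ,
      (∃ C₁ : ℝ, ∀ s ∈ Icc 0 T, ∀ t ∈ Icc 0 T,
        |Z₁ t - Z₁ s - Y s * (X t j - X s j) - ∑ i, Y' s i * XX s t i j|
          ≤ C₁ * |t - s| ^ (3 * α)) →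
      (∃ C₂ : ℝ, ∀ s ∈ Icc 0 T, ∀ t ∈ Icc 0 T,
        |Z₂ t - Z₂ s - Y s * (X t j - X s j) - ∑ i, Y' s i * XX s t i j|
          ≤ C₂ * |t - s| ^ (3 * α)) →
      ∃ c : ℝ, ∀ t ∈ Icc 0 T, Z₁ t = Z₂ t + c) := by
  have hθ : 1 < 3 * α := by linarith
  have hα0 : 0 ≤ α := by linarith
  have hC : 0 ≤ C := by
    have h := (abs_nonneg _).trans (hX j 0 ⟨le_rfl, hT.le⟩ T ⟨hT.le, le_rfl⟩)
    have hpos : 0 < |T - 0| ^ α := Real.rpow_pos_of_pos (by simpa using hT.ne') _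
    exact nonneg_of_mul_nonneg_left h hpos
  constructor
  · have hXX0 : ∀ i, ∀ s ∈ Icc 0 T, XX s s i j = 0 := by
      intro i s hs
      have h := hXX i j s hs s hs
      rw [sub_self, abs_zero, Real.zero_rpow (by linarith), mul_zero] at h
      exact abs_nonpos_iff.1 h
    suffices H : ∃ Z : ℝ → ℝ, ∃ C' : ℝ, ∀ s ∈ Icc 0 T, ∀ t ∈ Icc 0 T,
        |Z t - Z s - (Y s * (X t j - X s j) + ∑ i, Y' s i * XX s t i j)|
          ≤ C' * |t - s| ^ (3 * α) by
      obtain ⟨Z, C', h⟩ := H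
      refine ⟨Z, C', fun s hs t ht => ?_⟩
      rw [sub_sub _ (Y s * _)]
      exact h s hs t ht
    refine exists_sewing (D := Icc 0 T) hθ (K := C * C + n * (C * C))
      (A := fun s t => Y s * (X t j - X s j) + ∑ i, Y' s i * XX s t i j) (by positivity)
      (fun s hs => by simp [hXX0 _ s hs]) ?_
    intro s hs u hu t ht
    -- Chen's relation identifies the defect of the germ
    have hdef : Y s * (X t j - X s j) + ∑ i, Y' s i * XX s t i j
        - (Y s * (X u j - X s j) + ∑ i, Y' s i * XX s u i j)
        - (Y u * (X t j - X u j) + ∑ i, Y' u i * XX u t i j)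
        = -((Y u - Y s - ∑ i, Y' s i * (X u i - X s i)) * (X t j - X u j))
          - ∑ i, (Y' u i - Y' s i) * XX u t i j := by
      have h1 : ∑ i, Y' s i * XX s t i j = ∑ i, Y' s i * XX s u i j + ∑ i, Y' s i * XX u t i j
          + (∑ i, Y' s i * (X u i - X s i)) * (X t j - X u j) := by
        rw [Finset.sum_mul, ← Finset.sum_add_distrib, ← Finset.sum_add_distrib]
        refine Finset.sum_congr rfl fun i _ => ?_
        linear_combination Y' s i * hChen i j s hs u hu t ht
      have h2 : ∑ i, (Y' u i - Y' s i) * XX u t i j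
          = ∑ i, Y' u i * XX u t i j - ∑ i, Y' s i * XX u t i j := by
        rw [← Finset.sum_sub_distrib]
        exact Finset.sum_congr rfl fun i _ => by ring
      rw [h1, h2]
      ring
    rw [hdef]
    set r : ℝ := |u - s| + |t - u| with hr
    have hr1 : |u - s| ≤ r := le_add_of_nonneg_right (abs_nonneg _)
    have hr2 : |t - u| ≤ r := le_add_of_nonneg_left (abs_nonneg _)
    have hr0 : 0 ≤ r := (abs_nonneg _).trans hr1
    have hpow : r ^ (3 * α) = r ^ (2 * α) * r ^ α := by
      rw [← Real.rpow_add_of_nonneg hr0 (by linarith) hα0]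
      congr 1
      ring
    have mono1 : ∀ x : ℝ, |x| ≤ r → C * |x| ^ α ≤ C * r ^ α := fun x hx => by gcongr
    have mono2 : ∀ x : ℝ, |x| ≤ r → C * |x| ^ (2 * α) ≤ C * r ^ (2 * α) := fun x hx => by gcongr
    have b1 : |(Y u - Y s - ∑ i, Y' s i * (X u i - X s i)) * (X t j - X u j)|
        ≤ C * C * r ^ (3 * α) := by
      rw [abs_mul, hpow]
      calc _ ≤ (C * r ^ (2 * α)) * (C * r ^ α) :=
            mul_le_mul ((hY s hs u hu).trans (mono2 _ hr1)) ((hX j u hu t ht).trans (mono1 _ hr2))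
              (abs_nonneg _) (by positivity)
        _ = _ := by ring
    have b2 : |∑ i, (Y' u i - Y' s i) * XX u t i j| ≤ n * (C * C) * r ^ (3 * α) := by
      calc _ ≤ ∑ i, |(Y' u i - Y' s i) * XX u t i j| := Finset.abs_sum_le_sum_abs _ _
        _ ≤ ∑ _i : Fin n, C * C * r ^ (3 * α) := by
            refine Finset.sum_le_sum fun i _ => ?_
            rw [abs_mul, hpow]
            calc _ ≤ (C * r ^ α) * (C * r ^ (2 * α)) :=
                  mul_le_mul ((hY' s hs u hu i).trans (mono1 _ hr1))
                    ((hXX i j u hu t ht).trans (mono2 _ hr2)) (abs_nonneg _) (by positivity)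
              _ = _ := by ring
        _ = _ := by simp; ring
    rw [abs_le] at b1 b2 ⊢
    constructor <;> linarith [b1.1, b1.2, b2.1, b2.2]
  · rintro Z₁ Z₂ ⟨C₁, h₁⟩ ⟨C₂, h₂⟩
    have hconst := eq_of_holder_gt_one hθ (convex_Icc 0 T) (W := fun t => Z₁ t - Z₂ t)
      (C := C₁ + C₂) (fun s hs t ht => by
        have a := abs_le.1 (h₁ s hs t ht)
        have b := abs_le.1 (h₂ s hs t ht)
        rw [abs_le]
        constructor <;> linarith [a.1, a.2, b.1, b.2])
    refine ⟨Z₁ 0 - Z₂ 0, fun t ht => ?_⟩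
    have := hconst 0 ⟨le_rfl, hT.le⟩ t ht
    linarith
end
end
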